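/- For all integers C ≥ 1 and D ≥ 1, f(C,D) = C·f(C−1,D) + D·f(C,D−1), where f(C,D) = [s_{(2^C,1^D)}] X_{GN_{C+D,C}} for C, D ≥ 0 and (2^a,1^b) denotes the partition with a parts equal to 2 followed by b parts equal to 1. -/

import Mathlib

open scoped Classical

/-! ### Cells and Young diagrams -/

/-- A cell of a Young diagram: `(row, column)`, both 0-indexed, rows from the top. -/
abbrev Cell : Type := ℕ × ℕ

/-- The length of row `i` (0-indexed from the top) of the Young diagram of the
partition `lam`, whose parts are arranged in weakly decreasing order. -/
def rowLen {N : ℕ} (lam : Nat.Partition N) (i : ℕ) : ℕ :=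
  ((lam.parts.sort (· ≤ ·)).reverse).getD i 0

/-- The Young diagram of a partition, as a set of cells. -/
def diag {N : ℕ} (lam : Nat.Partition N) : Set Cell :=
  {c : Cell | c.2 < rowLen lam c.1}

/-- The number of rows (the length) of a partition. -/
def numRows {N : ℕ} (lam : Nat.Partition N) : ℕ := Multiset.card lam.parts

/-! ### Chromatic symmetric functions and Schur functions, as monomial-coefficient
functions.  A formal power series of bounded degree in the commuting variables
`x_0, x_1, x_2, …` is recorded by the map sending an exponent vector `μ : ℕ → ℕ`
(only finitely many nonzero entries ever matter) to the coefficient of the monomial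
`∏ i, x_i ^ μ i`.  Colors / tableau entries are positive integers, so the variable
`x_0` is never used. -/

/-- A proper coloring of `G` by positive integers. -/
def IsProperColoring {V : Type*} (G : SimpleGraph V) (f : V → ℕ) : Prop :=
  (∀ v, 0 < f v) ∧ ∀ u v, G.Adj u v → f u ≠ f v

/-- The coefficient of the monomial `∏ i, x_i ^ μ i` in the chromatic symmetric
function `X_G = ∑_{proper colorings f} ∏_{v} x_{f v}`. -/
noncomputable def XCoeff {V : Type*} [Fintype V] (G : SimpleGraph V) (μ : ℕ → ℕ) : ℚ :=
  Nat.card {f : V → ℕ //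
    IsProperColoring G f ∧ ∀ i, Nat.card {v : V // f v = i} = μ i}

/-- A semistandard Young tableau of shape `lam`: positive entries on the diagram
(normalized to `0` off the diagram), weakly increasing along rows, strictly
increasing down columns. -/
def IsSSYT {N : ℕ} (lam : Nat.Partition N) (t : Cell → ℕ) : Prop :=
  (∀ c, c ∉ diag lam → t c = 0) ∧ (∀ c ∈ diag lam, 0 < t c) ∧
  (∀ i j : ℕ, ((i, j + 1) : Cell) ∈ diag lam → t (i, j) ≤ t (i, j + 1)) ∧
  (∀ i j : ℕ, ((i + 1, j) : Cell) ∈ diag lam → t (i, j) < t (i + 1, j))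

/-- The coefficient of the monomial `∏ i, x_i ^ μ i` in the Schur function `s_lam`,
i.e. the number of SSYT of shape `lam` and weight `μ`. -/
noncomputable def schurFn {N : ℕ} (lam : Nat.Partition N) (μ : ℕ → ℕ) : ℚ :=
  Nat.card {t : Cell → ℕ // IsSSYT lam t ∧
    ∀ i, Nat.card {c : Cell // c ∈ diag lam ∧ t c = i} = μ i}

/-- The coefficient `[s_lam] f` of the Schur function `s_lam` in the (unique, when it
exists) expansion `f = ∑_{ν ⊢ N} c_ν s_ν` of a symmetric function `f`, homogeneous of
degree `N`, given by its monomial coefficients. -/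
noncomputable def sCoeff {N : ℕ} (f : (ℕ → ℕ) → ℚ) (lam : Nat.Partition N) : ℚ :=
  if h : ∃ c : Nat.Partition N →₀ ℚ, ∀ μ, f μ = c.sum fun ν a => a * schurFn ν μ
  then h.choose lam else 0

/-! ### Graphs: generalized nets, generalized spiders, disjoint unions -/

/-- The generalized net `GN_{n,m}`: the complete graph on the body `Fin n`, with a
pendant (`Sum.inr j`) attached to the anchor `Sum.inl j` for each `j : Fin m`. -/
def genNet (n m : ℕ) : SimpleGraph (Fin n ⊕ Fin m) :=
  SimpleGraph.fromRel fun a b =>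
    match a, b with
    | Sum.inl _, Sum.inl _ => True
    | Sum.inl i, Sum.inr j => (i : ℕ) = (j : ℕ)
    | Sum.inr _, _ => False

/-- The generalized spider `GS_{n,(2,1^{m-1})}`: the complete graph on the body
`Fin n`, a pendant `Sum.inr (Sum.inl j)` attached to the body vertex `Sum.inl j` for
each `j : Fin m`, and one extra vertex `Sum.inr (Sum.inr 0)` (the special pendant)
attached to the pendant `Sum.inr (Sum.inl 0)`, so that the body vertex `0` (the
special anchor) carries an attached path on two vertices. -/
def genSpider2 (n m : ℕ) : SimpleGraph (Fin n ⊕ (Fin m ⊕ Fin 1)) :=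
  SimpleGraph.fromRel fun a b =>
    match a, b with
    | Sum.inl _, Sum.inl _ => True
    | Sum.inl i, Sum.inr (Sum.inl j) => (i : ℕ) = (j : ℕ)
    | Sum.inr (Sum.inl j), Sum.inr (Sum.inr _) => (j : ℕ) = 0
    | _, _ => False

/-- Disjoint union of two simple graphs. -/
def disjUnion {α β : Type*} (G : SimpleGraph α) (H : SimpleGraph β) :
    SimpleGraph (α ⊕ β) :=
  SimpleGraph.fromRel fun a b =>
    match a, b with
    | Sum.inl a, Sum.inl b => G.Adj a b
    | Sum.inr a, Sum.inr b => H.Adj a b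
    | _, _ => False

/-- The one-vertex graph `K_1`. -/
def K1 : SimpleGraph (Fin 1) := ⊥

/-- The path (= complete graph) on two vertices `P_2`. -/
def P2 : SimpleGraph (Fin 2) := ⊤

/-! ### Operations on partitions -/

/-- `removeOnes lam t` is the partition `lam ∖ 1^t` obtained by deleting `t` parts
equal to `1` from `lam` (junk value if `lam` has fewer than `t` parts equal to `1`). -/
def removeOnes {N : ℕ} (lam : Nat.Partition N) (t : ℕ) : Nat.Partition (N - t) :=
  if h : Multiset.replicate t 1 ≤ lam.parts then
    { parts := lam.parts - Multiset.replicate t 1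
      parts_pos := fun hx =>
        lam.parts_pos (Multiset.mem_of_le (tsub_le_self) hx)
      parts_sum := by
        have h1 : (lam.parts - Multiset.replicate t 1) + Multiset.replicate t 1
            = lam.parts := tsub_add_cancel_of_le h
        have h2 := congrArg Multiset.sum h1
        rw [Multiset.sum_add, Multiset.sum_replicate, lam.parts_sum] at h2
        simp only [smul_eq_mul, mul_one] at h2
        omega }
  else Nat.Partition.indiscrete (N - t)

/-- The partition `(2^a, 1^b)` of `2*a + b`. -/
def twoOne (a b : ℕ) : Nat.Partition (2 * a + b) where
  parts := Multiset.replicate a 2 + Multiset.replicate b 1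
  parts_pos := by
    intro i hi
    rw [Multiset.mem_add] at hi
    rcases hi with hi | hi <;> · rw [Multiset.eq_of_mem_replicate hi]; omega
  parts_sum := by
    rw [Multiset.sum_add, Multiset.sum_replicate, Multiset.sum_replicate]
    simp only [smul_eq_mul, mul_one]
    omega

/-! ### Special rim hook `G`-tabloids -/

/-- Two cells are adjacent if they share an edge. -/
def cellAdj (c d : Cell) : Prop :=
  (c.1 = d.1 ∧ (c.2 + 1 = d.2 ∨ d.2 + 1 = c.2)) ∨
  (c.2 = d.2 ∧ (c.1 + 1 = d.1 ∨ d.1 + 1 = c.1))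

/-- A set of cells is (the diagram of) a Young diagram if it is closed under
decreasing either coordinate. -/
def IsYoungDiag (D : Set Cell) : Prop :=
  ∀ i j i' j' : ℕ, ((i, j) : Cell) ∈ D → i' ≤ i → j' ≤ j → ((i', j') : Cell) ∈ D

/-- A set of cells is connected (via edge-adjacency, within the set). -/
def CellConnected (S : Set Cell) : Prop :=
  ∀ c ∈ S, ∀ d ∈ S, Relation.ReflTransGen (fun a b => a ∈ S ∧ b ∈ S ∧ cellAdj a b) c d

/-- A border strip (= rim hook, as a set of cells): nonempty, connected, and
containing no 2×2 square of cells. -/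
def IsBorderStrip (H : Set Cell) : Prop :=
  H.Nonempty ∧ CellConnected H ∧
    ∀ i j : ℕ, ¬(((i, j) : Cell) ∈ H ∧ ((i + 1, j) : Cell) ∈ H ∧
      ((i, j + 1) : Cell) ∈ H ∧ ((i + 1, j + 1) : Cell) ∈ H)

/-- `H` is a rim hook of the Young diagram `D`: a border strip contained in `D`
whose removal leaves a Young diagram. -/
def IsRimHookOf (D H : Set Cell) : Prop :=
  H ⊆ D ∧ IsBorderStrip H ∧ IsYoungDiag (D \ H)

/-- `IsRemovalSeq L D` says that the sets of cells in the list `L` may be removed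
successively from the diagram `D`, each being a rim hook of what remains, with
nothing left at the end. -/
def IsRemovalSeq : List (Set Cell) → Set Cell → Prop
  | [], D => D = ∅
  | H :: L, D => IsRimHookOf D H ∧ IsRemovalSeq L (D \ H)

/-- A special rim hook `G`-tabloid of shape `lam`, with respect to an order `r` on
the vertices of `G`: the cells of the diagram of `lam` are filled bijectively with
the vertices of `G` (vertex `v` goes in cell `pos v`), and the diagram is tiled by
rim hooks, successively removable, each meeting the first column.  The rim hooks are
recorded by the labelling `hk`, which assigns to each vertex the topmost row in which
its rim hook meets the first column.  The vertices in each rim hook form a stable set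
of `G` and, read from the rim hook's (bottom) cell in the first column — i.e. in
increasing order of the diagonal index `column − row` — they increase with respect
to `r`. -/
structure SRHGTabloid {V : Type*} (G : SimpleGraph V) (r : V → V → Prop)
    {N : ℕ} (lam : Nat.Partition N) where
  /-- the cell occupied by each vertex -/
  pos : V → Cell
  /-- the label of the rim hook containing each vertex: the topmost row in which
  that rim hook meets the first column -/
  hk : V → ℕ
  pos_inj : Function.Injective pos
  pos_range : Set.range pos = diag lam
  hk_mem : ∀ v, ((hk v, 0) : Cell) ∈ pos '' {u | hk u = hk v}
  hk_min : ∀ v i, ((i, 0) : Cell) ∈ pos '' {u | hk u = hk v} → hk v ≤ i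
  removal : ∃ L : List ℕ, L.Nodup ∧ (∀ i, i ∈ L ↔ ∃ v, hk v = i) ∧
    IsRemovalSeq (L.map fun i => pos '' {u | hk u = i}) (diag lam)
  stable : ∀ u v, hk u = hk v → u ≠ v → ¬G.Adj u v
  increasing : ∀ u v, hk u = hk v →
    ((pos u).2 : ℤ) - ((pos u).1 : ℤ) < ((pos v).2 : ℤ) - ((pos v).1 : ℤ) → r u v

/-- The sign of a special rim hook `G`-tabloid: `(-1)` to the total number of north
steps, where a rim hook spanning `k` rows contributes `k - 1` north steps. -/
noncomputable def tabSign {V : Type*} {G : SimpleGraph V} {r : V → V → Prop}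
    {N : ℕ} {lam : Nat.Partition N} (T : SRHGTabloid G r lam) : ℤ :=
  (-1) ^ ∑ i ∈ Finset.range N,
    ({a : ℕ | ∃ v, T.hk v = i ∧ (T.pos v).1 = a}.ncard - 1)

/-- The cells of the head of a tabloid of shape `lam`: the rows of length `≥ 2`. -/
def headCells {N : ℕ} (lam : Nat.Partition N) : Set Cell :=
  {c : Cell | c ∈ diag lam ∧ 2 ≤ rowLen lam c.1}

/-- The cells of the tail of a tabloid of shape `lam`: the rows of length `1`. -/
def tailCells {N : ℕ} (lam : Nat.Partition N) : Set Cell :=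
  {c : Cell | c ∈ diag lam ∧ rowLen lam c.1 = 1}

/-- Two special rim hook `G`-tabloids have the same head: the same cells of the head
are occupied by the same vertices, and the rim hook structure restricted to the head
agrees. -/
def SameHead {V : Type*} {G : SimpleGraph V} {r : V → V → Prop} {N : ℕ}
    {lam : Nat.Partition N} (T T' : SRHGTabloid G r lam) : Prop :=
  (∀ v, T.pos v ∈ headCells lam ↔ T'.pos v ∈ headCells lam) ∧
  (∀ v, T.pos v ∈ headCells lam → T.pos v = T'.pos v) ∧
  (∀ u v, T.pos u ∈ headCells lam → T.pos v ∈ headCells lam →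
    (T.hk u = T.hk v ↔ T'.hk u = T'.hk v))

/-- `f(C,D) = [s_{(2^C,1^D)}] X_{GN_{C+D,C}}`. -/
noncomputable def fCD (C D : ℕ) : ℚ :=
  sCoeff (XCoeff (genNet (C + D) C)) (twoOne C D)

/-! Coloring a graph in the order of its colors adds one stable set at a time, and filling a diagram
in the order of its entries adds one horizontal strip at a time. In both cases the operators adding
a strip of size `a` commute, so each gives an action of the noncommutative symmetric functions.
Kostka numbers being unitriangular, `[s_λ]X_G` for the two-column shape `λ = (2^C,1^D)` is the value
of `e_{C+D} e_C - e_{C+D+1} e_{C-1}` at the operators of `G`, and `e_k` evaluates on a set of `k`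
vertices to the number of acyclic orientations of the induced subgraph (Stanley). Hence `[s_λ]X_G`
is the coefficient of `x^C` in `(1 - x) P`, where `P` counts pairs of acyclic orientations of `G[I]`
and `G[Iᶜ]` with weight `x^|Iᶜ|`.

For generalized nets these numbers are explicit, and singling out one body vertex gives
`P_{C,D} = (C+D)! x^{C+D} (2x+1)^C + C (x+2) P_{C-1,D} + D P_{C,D-1}`. Since `P` is palindromic of
degree `2C + D`, induction shows that `(1 - x) P_{C,D}` has no terms of degree `C+1, …, C+D`, and
then the coefficient of `x^C` in the recurrence is the claim. -/

open Finset

/-! ### Strip systems -/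

/-- Noncommutative symmetric functions over `ℚ`. The generator `FreeAlgebra.ι ℚ a` stands for the
complete function `h_a`; the relation `h_0 = 1` is not imposed here, but holds in every
evaluation `StripSystem.eval`. -/
abbrev NSym : Type := FreeAlgebra ℚ ℕ

namespace NSym

/-- The product `h_{w₀} h_{w₁} ⋯` of complete functions. -/
noncomputable def complete (w : List ℕ) : NSym := (w.map (FreeAlgebra.ι ℚ)).prod

/-- The elementary functions, given by the recursion `∑ i, (-1)^i h_i e_{k - i} = 0` for `k ≥ 1`. -/
noncomputable def elementary : ℕ → NSym
  | 0 => 1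
  | k + 1 => ∑ i : Fin (k + 1),
      (-1 : ℚ) ^ (i : ℕ) • (FreeAlgebra.ι ℚ (i + 1 : ℕ) * elementary (k - i))

theorem linearMap_ext {M : Type*} [AddCommGroup M] [Module ℚ M] {f g : NSym →ₗ[ℚ] M}
    (h : ∀ w, f (complete w) = g (complete w)) : f = g := by
  refine (FreeAlgebra.basisFreeMonoid ℚ ℕ).ext fun w => ?_
  have hw : FreeAlgebra.basisFreeMonoid ℚ ℕ w = complete w.toList := by
    have hlift := FreeMonoid.lift_apply (FreeAlgebra.ι ℚ) w
    simpa [FreeAlgebra.basisFreeMonoid, FreeAlgebra.equivMonoidAlgebraFreeMonoid, complete]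
      using hlift
  rw [hw, h]

end NSym

/-- A graded poset with a notion of strip between comparable elements. The number of saturated
chains of strips with prescribed sizes is what both monomial coefficients of a chromatic symmetric
function (strips: stable sets) and Kostka numbers (strips: horizontal strips) count. -/
structure StripSystem (σ : Type*) [PartialOrder σ] where
  /-- the rank function -/
  size : σ → ℕ
  /-- `IsStrip r s` means that `s` is obtained from `r` by adding a strip -/
  IsStrip : σ → σ → Prop
  size_strictMono : StrictMono size
  isStrip_refl : ∀ s, IsStrip s s
  le_of_isStrip : ∀ {r s}, IsStrip r s → r ≤ s

namespace StripSystem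

variable {σ : Type*} [PartialOrder σ] (S : StripSystem σ) {r s t : σ} {a b : ℕ} {w : List ℕ}

/-- Adding a strip of size `a`. -/
def Step (a : ℕ) (r s : σ) : Prop := S.IsStrip r s ∧ S.size s = S.size r + a

variable {S}

theorem Step.le (h : S.Step a r s) : r ≤ s := S.le_of_isStrip h.1

theorem step_zero : S.Step 0 r s ↔ r = s := by
  constructor
  · rintro ⟨h, hsize⟩
    exact (S.le_of_isStrip h).eq_of_not_lt fun hlt => (S.size_strictMono hlt).ne' hsize
  · rintro rfl
    exact ⟨S.isStrip_refl r, rfl⟩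

variable (S) in
/-- `S.IsChain w r s c`: the sequence `c` leads from `r` to `s` by strips of sizes `w₀, w₁, …`.
After the last step it stays constant, because the default entry of `List.getD` is `0`. -/
def IsChain (w : List ℕ) (r s : σ) (c : ℕ → σ) : Prop :=
  c 0 = r ∧ (∀ k, S.Step (w.getD k 0) (c k) (c (k + 1))) ∧ c w.length = s

namespace IsChain

variable {c : ℕ → σ}

theorem monotone (h : S.IsChain w r s c) : Monotone c :=
  monotone_nat_of_le_succ fun k => (h.2.1 k).le

theorem apply_of_length_le (h : S.IsChain w r s c) {k : ℕ} (hk : w.length ≤ k) : c k = s := by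
  induction k, hk using Nat.le_induction with
  | base => exact h.2.2
  | succ k hk ih =>
    have hstep := h.2.1 k
    rw [List.getD_eq_default _ _ hk, step_zero] at hstep
    rw [← hstep, ih]

theorem le_apply (h : S.IsChain w r s c) (k : ℕ) : r ≤ c k := h.1 ▸ h.monotone k.zero_le

theorem apply_le (h : S.IsChain w r s c) (k : ℕ) : c k ≤ s :=
  (h.monotone (le_max_left k w.length)).trans_eq (h.apply_of_length_le (le_max_right _ _))

theorem le (h : S.IsChain w r s c) : r ≤ s := (h.le_apply 0).trans (h.apply_le 0)

end IsChain

theorem isChain_nil {c : ℕ → σ} : S.IsChain [] r s c ↔ r = s ∧ c = fun _ => r := by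
  constructor
  · intro h
    have hrs : r = s := h.1.symm.trans h.2.2
    exact ⟨hrs, funext fun k => (h.apply_of_length_le k.zero_le).trans hrs.symm⟩
  · rintro ⟨rfl, rfl⟩
    exact ⟨rfl, fun k => by simpa using step_zero.2 rfl, rfl⟩

variable (S) in
/-- The transfer operator adding a strip of size `a`. -/
noncomputable def transfer (a : ℕ) : IncidenceAlgebra ℚ σ :=
  ⟨fun r s => if S.Step a r s then 1 else 0, fun _ _ h => if_neg fun hs => h hs.le⟩

theorem transfer_apply (a : ℕ) (r s : σ) :
    S.transfer a r s = if S.Step a r s then 1 else 0 := rfl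

theorem transfer_zero [DecidableEq σ] : S.transfer 0 = 1 := by
  ext r s
  simp [transfer_apply, step_zero, IncidenceAlgebra.one_apply]

theorem sum_transfer_mul_ite (v : σ → σ → ℚ) (k : ℕ) {r x s : σ} (hrx : r ≤ x) (hxs : x ≤ s) :
    ∑ i : Fin (k + 1), (-1) ^ (i : ℕ) * (S.transfer (i + 1) r x *
        if x ≤ s ∧ S.size s = S.size x + (k - i) then v x s else 0) =
      if S.size s = S.size r + (k + 1) ∧ r < x ∧ S.IsStrip r x then
        -(-1) ^ S.size r * ((-1) ^ S.size x * v x s) else 0 := by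
  have hsize_mono := S.size_strictMono.monotone
  split_ifs with h
  · obtain ⟨hsize, hrx, hstrip⟩ := h
    have hlt : S.size r < S.size x := S.size_strictMono hrx
    have hle : S.size x ≤ S.size s := hsize_mono hxs
    obtain ⟨i, hi⟩ := Nat.exists_eq_add_of_lt hlt
    rw [Fintype.sum_eq_single ⟨i, by omega⟩ fun j hj => ?_]
    · rw [transfer_apply, if_pos ⟨hstrip, hi⟩, if_pos ⟨hxs, by simp only; omega⟩, hi]
      have hsq : ((-1 : ℚ) ^ S.size r) ^ 2 = 1 := by rw [← pow_mul, pow_mul', neg_one_sq, one_pow]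
      linear_combination (-((-1) ^ i * v x s)) * hsq
    · have hij : (j : ℕ) ≠ i := fun hij => hj (Fin.ext hij)
      rw [transfer_apply, if_neg fun hstep => by have := hstep.2; omega, zero_mul, mul_zero]
  · refine sum_eq_zero fun i _ => ?_
    rw [transfer_apply]
    split_ifs with hstep hsize
    · have hx := hstep.2
      refine absurd ⟨by omega, hrx.lt_of_ne ?_, hstep.1⟩ h
      rintro rfl
      omega
    all_goals simp

variable [LocallyFiniteOrder σ]

variable (S) in
/-- A chain for the word `a :: w` is a first step followed by a chain for `w`. -/
noncomputable def chainConsEquiv (a : ℕ) (w : List ℕ) (r s : σ) :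
    {c // S.IsChain (a :: w) r s c} ≃
      Σ x : {x ∈ Icc r s | S.Step a r x}, {c // S.IsChain w x s c} where
  toFun c :=
    ⟨⟨c.1 1, mem_filter.2 ⟨mem_Icc.2 ⟨c.2.le_apply 1, c.2.apply_le 1⟩,
      by simpa [c.2.1] using c.2.2.1 0⟩⟩,
    fun k => c.1 (k + 1), rfl, fun k => by simpa using c.2.2.1 (k + 1), c.2.2.2⟩
  invFun p :=
    ⟨fun k => k.casesOn r p.2.1, rfl, by
      rintro (_ | k)
      · simpa [p.2.2.1] using (mem_filter.1 p.1.2).2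
      · simpa using p.2.2.2.1 k, p.2.2.2.2⟩
  left_inv := by
    rintro ⟨c, hc⟩
    ext (_ | k)
    · exact hc.1.symm
    · rfl
  right_inv := by
    rintro ⟨⟨x, hx⟩, c, hc0, hc⟩
    obtain rfl : c 0 = x := hc0
    rfl

theorem finite_chain (w : List ℕ) (r s : σ) : Finite {c // S.IsChain w r s c} := by
  induction w generalizing r with
  | nil =>
    have : Subsingleton {c // S.IsChain [] r s c} :=
      ⟨fun c d => Subtype.ext ((isChain_nil.1 c.2).2.trans (isChain_nil.1 d.2).2.symm)⟩
    infer_instance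
  | cons a w ih => exact Finite.of_equiv _ (S.chainConsEquiv a w r s).symm

theorem card_chain_cons (a : ℕ) (w : List ℕ) (r s : σ) :
    Nat.card {c // S.IsChain (a :: w) r s c} =
      ∑ x ∈ Icc r s with S.Step a r x, Nat.card {c // S.IsChain w x s c} := by
  have (x : σ) := finite_chain (S := S) w x s
  rw [Nat.card_congr (S.chainConsEquiv a w r s), Nat.card_sigma,
    sum_coe_sort _ fun x => Nat.card {c // S.IsChain w x s c}]

theorem commute_transfer
    (h : ∀ r s, ∃ φ : σ → σ, ∀ a b x, S.Step a r x → S.Step b x s →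
      S.Step b r (φ x) ∧ S.Step a (φ x) s ∧ φ (φ x) = x) (a b : ℕ) :
    Commute (S.transfer a) (S.transfer b) := by
  ext r s -
  obtain ⟨φ, hφ⟩ := h r s
  have hcount (a b : ℕ) : (S.transfer a * S.transfer b) r s =
      #{x ∈ Icc r s | S.Step a r x ∧ S.Step b x s} := by
    simp only [IncidenceAlgebra.mul_apply, transfer_apply, ← ite_and, mul_ite, mul_one, mul_zero,
      sum_boole, and_comm]
  have hmaps (a b : ℕ) : ∀ x ∈ ({x ∈ Icc r s | S.Step a r x ∧ S.Step b x s} : Finset σ),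
      φ x ∈ ({x ∈ Icc r s | S.Step b r x ∧ S.Step a x s} : Finset σ) ∧ φ (φ x) = x := by
    intro x hx
    obtain ⟨-, hr, hs⟩ := mem_filter.1 hx
    obtain ⟨hr', hs', hinv⟩ := hφ a b x hr hs
    exact ⟨mem_filter.2 ⟨mem_Icc.2 ⟨hr'.le, hs'.le⟩, hr', hs'⟩, hinv⟩
  rw [hcount, hcount, card_nbij' φ φ (fun x hx => (hmaps a b x hx).1)
    (fun x hx => (hmaps b a x hx).1) (fun x hx => (hmaps a b x hx).2)
    fun x hx => (hmaps b a x hx).2]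

variable [DecidableEq σ]

variable (S) in
/-- Evaluation of noncommutative symmetric functions at the transfer operators: `h_a` adds a strip
of size `a`. -/
noncomputable def eval : NSym →ₐ[ℚ] IncidenceAlgebra ℚ σ := FreeAlgebra.lift ℚ S.transfer

variable (S) in
/-- The matrix entry of `S.eval` from `r` to `s`. -/
noncomputable def evalAt (r s : σ) : NSym →ₗ[ℚ] ℚ where
  toFun p := S.eval p r s
  map_add' p q := by rw [map_add, IncidenceAlgebra.add_apply]
  map_smul' x p := by
    rw [map_smul, IncidenceAlgebra.constSMul_apply, RingHom.id_apply]

theorem evalAt_of_not_le (h : ¬r ≤ s) (p : NSym) : S.evalAt r s p = 0 :=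
  IncidenceAlgebra.apply_eq_zero_of_not_le h _

theorem evalAt_one (r s : σ) : S.evalAt r s 1 = if r = s then 1 else 0 := by
  rw [evalAt, LinearMap.coe_mk, AddHom.coe_mk, map_one, IncidenceAlgebra.one_apply]

theorem evalAt_mul (r s : σ) (p q : NSym) :
    S.evalAt r s (p * q) = ∑ x ∈ Icc r s, S.evalAt r x p * S.evalAt x s q := by
  simp only [evalAt, LinearMap.coe_mk, AddHom.coe_mk, map_mul, IncidenceAlgebra.mul_apply]

theorem evalAt_ι (a : ℕ) (r s : σ) :
    S.evalAt r s (FreeAlgebra.ι ℚ a) = S.transfer a r s := by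
  rw [evalAt, LinearMap.coe_mk, AddHom.coe_mk, eval, FreeAlgebra.lift_ι_apply]

theorem evalAt_complete (w : List ℕ) (r s : σ) :
    S.evalAt r s (NSym.complete w) = Nat.card {c // S.IsChain w r s c} := by
  induction w generalizing r with
  | nil =>
    rw [NSym.complete, List.map_nil, List.prod_nil, evalAt_one]
    by_cases h : r = s <;> simp [isChain_nil, h]
  | cons a w ih =>
    rw [NSym.complete, List.map_cons, List.prod_cons, ← NSym.complete, evalAt_mul,
      card_chain_cons, Nat.cast_sum, sum_filter]
    refine sum_congr rfl fun x _ => ?_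
    rw [ih, evalAt_ι, transfer_apply, ite_mul, one_mul, zero_mul]

theorem size_eq_of_evalAt_complete_ne_zero (h : S.evalAt r s (NSym.complete w) ≠ 0) :
    S.size s = S.size r + w.sum := by
  induction w generalizing r with
  | nil =>
    have hrs : r = s := by simpa [NSym.complete, evalAt_one] using h
    rw [hrs, List.sum_nil, add_zero]
  | cons a w ih =>
    rw [NSym.complete, List.map_cons, List.prod_cons, ← NSym.complete, evalAt_mul] at h
    obtain ⟨x, -, hx⟩ := exists_ne_zero_of_sum_ne_zero h
    have hstep : S.Step a r x := by
      by_contra hn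
      exact left_ne_zero_of_mul hx ((evalAt_ι a r x).trans (if_neg hn))
    rw [ih (right_ne_zero_of_mul hx), hstep.2, List.sum_cons, add_assoc]

theorem eval_complete (w : List ℕ) : S.eval (NSym.complete w) = (w.map S.transfer).prod := by
  simp only [NSym.complete, eval, map_list_prod, List.map_map, Function.comp_def,
    FreeAlgebra.lift_ι_apply]

theorem eval_complete_perm (hcomm : ∀ a b, Commute (S.transfer a) (S.transfer b))
    {w w' : List ℕ} (h : w.Perm w') : S.eval (NSym.complete w) = S.eval (NSym.complete w') := by
  rw [eval_complete, eval_complete]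
  refine (h.map S.transfer).prod_eq' ?_
  exact List.pairwise_map.2 (List.pairwise_of_forall fun a b => hcomm a b)

theorem eval_complete_filter_ne_zero (w : List ℕ) :
    S.eval (NSym.complete (w.filter (· ≠ 0))) = S.eval (NSym.complete w) := by
  simp only [eval_complete]
  induction w with
  | nil => rfl
  | cons a w ih =>
    by_cases ha : a = 0
    · simp [ha, transfer_zero, ← ih]
    · simp [ha, ← ih]

theorem evalAt_elementary_succ (k : ℕ) (r s : σ) :
    S.evalAt r s (NSym.elementary (k + 1)) = ∑ x ∈ Icc r s, ∑ i : Fin (k + 1),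
      (-1) ^ (i : ℕ) * (S.transfer (i + 1) r x * S.evalAt x s (NSym.elementary (k - i))) := by
  rw [NSym.elementary, map_sum, sum_comm]
  refine sum_congr rfl fun i _ => ?_
  simp only [map_smul, smul_eq_mul, evalAt_mul, evalAt_ι, mul_sum]

theorem evalAt_elementary {v : σ → σ → ℚ} (hrefl : ∀ r, v r r = 1)
    (hlt : ∀ r s, r < s →
      ∑ x ∈ Icc r s, (if S.IsStrip r x then (-1) ^ S.size x * v x s else 0) = 0)
    (k : ℕ) (r s : σ) :
    S.evalAt r s (NSym.elementary k) =
      if r ≤ s ∧ S.size s = S.size r + k then v r s else 0 := by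
  induction k using Nat.strong_induction_on generalizing r with
  | _ k ih =>
  obtain _ | k := k
  · rw [NSym.elementary, evalAt_one, add_zero]
    have heq : r ≤ s ∧ S.size s = S.size r ↔ r = s :=
      ⟨fun h => h.1.eq_of_not_lt fun hlt => (S.size_strictMono hlt).ne' h.2,
        by rintro rfl; exact ⟨le_rfl, rfl⟩⟩
    by_cases h : r = s <;> simp [heq, h, hrefl]
  by_cases hrs : r ≤ s; swap
  · rw [evalAt_of_not_le hrs, if_neg fun h => hrs h.1]
  have hexpand : S.evalAt r s (NSym.elementary (k + 1)) = ∑ x ∈ Icc r s,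
      if S.size s = S.size r + (k + 1) ∧ r < x ∧ S.IsStrip r x then
        -(-1) ^ S.size r * ((-1) ^ S.size x * v x s) else 0 := by
    rw [evalAt_elementary_succ]
    refine sum_congr rfl fun x hx => ?_
    rw [← sum_transfer_mul_ite v k (mem_Icc.1 hx).1 (mem_Icc.1 hx).2]
    exact sum_congr rfl fun i _ => by rw [ih (k - i) (by omega)]
  by_cases hsize : S.size s = S.size r + (k + 1); swap
  · rw [hexpand, if_neg fun h => hsize h.2]
    exact sum_eq_zero fun x _ => if_neg fun h => hsize h.1
  have hrec := hlt r s (hrs.lt_of_ne fun h => by subst h; omega)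
  rw [← add_sum_erase _ _ (left_mem_Icc.2 hrs), if_pos (S.isStrip_refl r)] at hrec
  have hsq : ((-1 : ℚ) ^ S.size r) ^ 2 = 1 := by rw [← pow_mul, pow_mul', neg_one_sq, one_pow]
  calc S.evalAt r s (NSym.elementary (k + 1))
      = ∑ x ∈ (Icc r s).erase r, -(-1) ^ S.size r *
          (if S.IsStrip r x then (-1) ^ S.size x * v x s else 0) := by
        rw [hexpand, ← add_sum_erase _ _ (left_mem_Icc.2 hrs), if_neg fun h => h.2.1.false,
          zero_add]
        refine sum_congr rfl fun x hx => ?_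
        have hlt := (mem_Icc.1 (mem_of_mem_erase hx)).1.lt_of_ne (ne_of_mem_erase hx).symm
        simp only [hsize, hlt, true_and, mul_ite, mul_zero]
    _ = v r s := by
        rw [← mul_sum]
        linear_combination -(-1) ^ S.size r * hrec + v r s * hsq
    _ = _ := (if_pos ⟨hrs, hsize⟩).symm

end StripSystem

/-! ### Chains of strips as fillings -/

/-- The exponent vector of `x₁^{w₀} x₂^{w₁} ⋯`; the variable `x₀` never occurs. -/
def listWeight (w : List ℕ) : ℕ → ℕ
  | 0 => 0
  | i + 1 => w.getD i 0

theorem exists_eq_listWeight {μ : ℕ → ℕ} {n : ℕ} (hzero : μ 0 = 0) (hμ : ∀ i, n < i → μ i = 0) :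
    ∃ w, μ = listWeight w := by
  refine ⟨(List.range n).map fun i => μ (i + 1), funext ?_⟩
  rintro (_ | i)
  · exact hzero
  · rw [listWeight]
    by_cases hi : i < n
    · simp [List.getD, hi]
    · rw [List.getD_eq_default _ _ (by simpa using hi), hμ _ (by omega)]

namespace StripSystem

variable {σ : Type*} [PartialOrder σ]

/-- A realization of the elements of a strip system as finite sets of cells, `size` being the
number of cells. -/
structure CellModel (S : StripSystem σ) (X : Type*) where
  /-- the cells of an element -/
  cells : σ ↪o Set X
  finite_cells : ∀ s, (cells s).Finite
  ncard_cells : ∀ s, (cells s).ncard = S.size s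

namespace CellModel

variable {S : StripSystem σ} {X : Type*} (M : S.CellModel X) {s : σ}

/-- A filling of the cells of `s` by positive integers (and of all other cells by `0`) whose
sublevel sets form a sequence of strips. -/
def IsFilling (s : σ) (f : X → ℕ) : Prop :=
  (∀ x ∉ M.cells s, f x = 0) ∧ (∀ x ∈ M.cells s, 0 < f x) ∧
    ∃ c : ℕ → σ, ∀ k, M.cells (c k) = {x ∈ M.cells s | f x ≤ k} ∧ S.IsStrip (c k) (c (k + 1))

/-- The number of fillings of `s` of weight `μ`. -/
noncomputable def numFillings (s : σ) (μ : ℕ → ℕ) : ℕ :=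
  Nat.card {f // M.IsFilling s f ∧ ∀ i, Nat.card {x // x ∈ M.cells s ∧ f x = i} = μ i}

theorem exists_eq_listWeight_of_numFillings_ne_zero {μ : ℕ → ℕ} (h : M.numFillings s μ ≠ 0) :
    ∃ w, μ = listWeight w := by
  obtain ⟨⟨f, ⟨-, hpos, -⟩, hμ⟩⟩ := (Nat.card_ne_zero.1 h).1
  obtain ⟨n, hn⟩ := ((M.finite_cells s).image f).bddAbove
  have hempty {i : ℕ} (hi : ∀ x ∈ M.cells s, f x ≠ i) : μ i = 0 := by
    rw [← hμ i, Nat.card_eq_zero]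
    exact Or.inl ⟨fun x => hi x.1 x.2.1 x.2.2⟩
  exact exists_eq_listWeight (n := n) (hempty fun x hx => (hpos x hx).ne') fun i hi =>
    hempty fun x hx => ((hn ⟨x, hx, rfl⟩).trans_lt hi).ne

/-- The filling recording when each cell is added along a sequence of elements. Cells which are
never added receive `sInf ∅ = 0`. -/
noncomputable def entry (c : ℕ → σ) (x : X) : ℕ := sInf {k | x ∈ M.cells (c k)}

variable {M} {c : ℕ → σ}

theorem mem_cells_iff (hc : Monotone c) {x : X} {n : ℕ} (hx : x ∈ M.cells (c n)) (k : ℕ) :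
    x ∈ M.cells (c k) ↔ M.entry c x ≤ k :=
  ⟨fun h => Nat.sInf_le h, fun h =>
    M.cells.monotone (hc h) (Nat.sInf_mem (s := {k | x ∈ M.cells (c k)}) ⟨n, hx⟩)⟩

theorem card_level_succ {f : X → ℕ} (hc : ∀ k, M.cells (c k) = {x ∈ M.cells s | f x ≤ k})
    {k : ℕ} (hle : c k ≤ c (k + 1)) :
    Nat.card {x // x ∈ M.cells s ∧ f x = k + 1} = S.size (c (k + 1)) - S.size (c k) := by
  have hlevel : {x | x ∈ M.cells s ∧ f x = k + 1} = M.cells (c (k + 1)) \ M.cells (c k) := by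
    ext x
    simp only [hc, Set.mem_sdiff, Set.mem_ofPred_eq]
    grind
  change ({x | x ∈ M.cells s ∧ f x = k + 1} : Set X).ncard = _
  rw [hlevel, Set.ncard_sdiff (M.cells.monotone hle) (M.finite_cells _), M.ncard_cells,
    M.ncard_cells]

theorem entry_eq_of_sublevel {f : X → ℕ} (hc : ∀ k, M.cells (c k) = {x ∈ M.cells s | f x ≤ k})
    (hzero : ∀ x ∉ M.cells s, f x = 0) : M.entry c = f := by
  funext x
  by_cases hx : x ∈ M.cells s
  · have hset : {k | x ∈ M.cells (c k)} = Set.Ici (f x) := by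
      ext k
      simp [hc, hx]
    rw [entry, hset, csInf_Ici]
  · have hset : {k | x ∈ M.cells (c k)} = ∅ := by
      ext k
      simp [hc, hx]
    rw [entry, hset, Nat.sInf_empty, hzero x hx]

theorem le_length_of_card_level_eq_listWeight {w : List ℕ} {f : X → ℕ}
    (hw : ∀ i, Nat.card {x // x ∈ M.cells s ∧ f x = i} = listWeight w i) {x : X}
    (hx : x ∈ M.cells s) : f x ≤ w.length := by
  by_contra! hlt
  have hfinite : Finite {y // y ∈ M.cells s ∧ f y = f x} :=
    (M.finite_cells s).subset fun y hy => hy.1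
  have hcard := hw (f x)
  obtain ⟨i, hi⟩ := Nat.exists_eq_add_of_lt hlt
  rw [hi, listWeight, List.getD_eq_default _ _ (by omega), ← hi, Nat.card_eq_zero] at hcard
  rcases hcard with h | h
  · exact h.false ⟨x, hx, rfl⟩
  · exact h.not_finite hfinite

variable [OrderBot σ] {w : List ℕ}

theorem cells_eq_sublevel (hc : S.IsChain w ⊥ s c) (k : ℕ) :
    M.cells (c k) = {x ∈ M.cells s | M.entry c x ≤ k} := by
  ext x
  constructor
  · exact fun hx => ⟨M.cells.monotone (hc.apply_le k) hx, Nat.sInf_le hx⟩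
  · rintro ⟨hx, hk⟩
    exact (mem_cells_iff hc.monotone (n := w.length) (by rwa [hc.2.2]) k).2 hk

theorem isFilling_entry (hbot : M.cells ⊥ = ∅) (hc : S.IsChain w ⊥ s c) :
    M.IsFilling s (M.entry c) := by
  refine ⟨fun x hx => ?_, fun x hx => ?_, c, fun k => ⟨cells_eq_sublevel hc k, (hc.2.1 k).1⟩⟩
  · have hempty : {k | x ∈ M.cells (c k)} = ∅ :=
      Set.eq_empty_of_forall_notMem fun k hk => hx (M.cells.monotone (hc.apply_le k) hk)
    rw [entry, hempty, Nat.sInf_empty]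
  · rw [Nat.pos_iff_ne_zero]
    intro h
    have hx0 : x ∈ M.cells (c 0) := by
      rw [cells_eq_sublevel hc]
      exact ⟨hx, h.le⟩
    rw [hc.1, hbot] at hx0
    exact hx0

theorem card_entry_eq (hbot : M.cells ⊥ = ∅) (hc : S.IsChain w ⊥ s c) (i : ℕ) :
    Nat.card {x // x ∈ M.cells s ∧ M.entry c x = i} = listWeight w i := by
  obtain _ | i := i
  · have hpos := (isFilling_entry hbot hc).2.1
    rw [listWeight, Nat.card_eq_zero]
    exact Or.inl ⟨fun x => (hpos x.1 x.2.1).ne' x.2.2⟩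
  · rw [card_level_succ (cells_eq_sublevel hc) (hc.2.1 i).le, (hc.2.1 i).2,
      Nat.add_sub_cancel_left, listWeight]

theorem IsFilling.exists_isChain (hbot : M.cells ⊥ = ∅) {f : X → ℕ} (hf : M.IsFilling s f)
    (hw : ∀ i, Nat.card {x // x ∈ M.cells s ∧ f x = i} = listWeight w i) :
    ∃ c, S.IsChain w ⊥ s c ∧ M.entry c = f := by
  obtain ⟨hzero, hpos, c, hc⟩ := hf
  have hmono : Monotone c := monotone_nat_of_le_succ fun k => S.le_of_isStrip (hc k).2
  have hstart : c 0 = ⊥ := M.cells.injective <| by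
    rw [(hc 0).1, hbot]
    ext x
    simpa using fun hx => (hpos x hx).ne'
  have hend : c w.length = s := M.cells.injective <| by
    rw [(hc _).1]
    ext x
    simpa using le_length_of_card_level_eq_listWeight hw (x := x)
  refine ⟨c, ⟨hstart, fun k => ⟨(hc k).2, ?_⟩, hend⟩,
    entry_eq_of_sublevel (fun k => (hc k).1) hzero⟩
  have hle : c k ≤ c (k + 1) := hmono (Nat.le_add_right k 1)
  have hstep := card_level_succ (fun k => (hc k).1) hle
  rw [hw, listWeight] at hstep
  have hsize := S.size_strictMono.monotone hle
  omega

theorem numFillings_listWeight (hbot : M.cells ⊥ = ∅) (w : List ℕ) (s : σ) :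
    M.numFillings s (listWeight w) = Nat.card {c // S.IsChain w ⊥ s c} := by
  symm
  refine Nat.card_eq_of_bijective
    (fun c => ⟨M.entry c.1, isFilling_entry hbot c.2, card_entry_eq hbot c.2⟩) ⟨?_, ?_⟩
  · intro c d hcd
    have hentry : M.entry c.1 = M.entry d.1 := congrArg Subtype.val hcd
    refine Subtype.ext (funext fun k => M.cells.injective ?_)
    rw [cells_eq_sublevel c.2, cells_eq_sublevel d.2, hentry]
  · rintro ⟨f, hf, hw⟩
    obtain ⟨c, hc, rfl⟩ := hf.exists_isChain hbot hw
    exact ⟨⟨c, hc⟩, rfl⟩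

end CellModel

end StripSystem

/-! ### Shapes and semistandard tableaux -/

/-- Partitions of arbitrary size, as antitone sequences of row lengths. -/
abbrev Shape : Type := {f : ℕ →₀ ℕ // Antitone f}

namespace Shape

variable {κ ν τ : Shape} {r n : ℕ}

noncomputable instance : OrderBot Shape where
  bot := ⟨0, antitone_const⟩
  bot_le _ _ := Nat.zero_le _

/-- The number of cells. -/
noncomputable def size (ν : Shape) : ℕ := ν.1.degree

theorem size_strictMono : StrictMono size := by
  intro κ ν h
  obtain ⟨d, hd⟩ := exists_add_of_le (Subtype.coe_le_coe.2 h.le)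
  have hd0 : d.degree ≠ 0 := by
    rw [Ne, Finsupp.degree_eq_zero_iff]
    rintro rfl
    exact h.ne (Subtype.ext (by rw [hd, add_zero]))
  rw [size, size, hd, map_add]
  omega

theorem size_eq_sum_range (hn : ν.1 n = 0) : ν.size = ∑ r ∈ range n, ν.1 r := by
  rw [size, Finsupp.degree_apply]
  refine sum_subset (fun r hr => ?_) fun r _ hr => Finsupp.notMem_support_iff.1 hr
  by_contra hrn
  have : ν.1 r ≤ ν.1 n := ν.2 (by simpa using hrn)
  exact Finsupp.mem_support_iff.1 hr (by omega)

theorem exists_apply_eq_zero (ν : Shape) : ∃ n, ν.1 n = 0 := by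
  obtain ⟨n, hn⟩ := Infinite.exists_notMem_finset ν.1.support
  exact ⟨n, Finsupp.notMem_support_iff.1 hn⟩

/-- `ν / κ` has at most one cell in each column. -/
def IsHorizontalStrip (κ ν : Shape) : Prop := ∀ r, κ.1 r ≤ ν.1 r ∧ ν.1 (r + 1) ≤ κ.1 r

/-- `ν / κ` has at most one cell in each row. -/
def IsVerticalStrip (κ ν : Shape) : Prop := ∀ r, κ.1 r ≤ ν.1 r ∧ ν.1 r ≤ κ.1 r + 1

/-- Semistandard tableaux are chains of horizontal strips. -/
noncomputable def tableauSystem : StripSystem Shape where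
  size := size
  IsStrip := IsHorizontalStrip
  size_strictMono := size_strictMono
  isStrip_refl ν r := ⟨le_rfl, ν.2 r.le_succ⟩
  le_of_isStrip h r := (h r).1

/-- The set of cells of the Young diagram. -/
def cellSet (ν : Shape) : Set Cell := {x | x.2 < ν.1 x.1}

theorem cellSet_subset_iff : κ.cellSet ⊆ ν.cellSet ↔ κ ≤ ν := by
  constructor
  · intro h r
    by_contra! hlt
    have hmem : ((r, ν.1 r) : Cell) ∈ κ.cellSet := hlt
    exact lt_irrefl (ν.1 r) (h hmem)
  · exact fun h x hx => lt_of_lt_of_le hx (h x.1)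

theorem cellSet_eq_coe (ν : Shape) :
    ν.cellSet = (ν.1.support.sigma fun r => range (ν.1 r)).map
      (Equiv.sigmaEquivProd ℕ ℕ).toEmbedding := by
  ext ⟨i, j⟩
  simp only [cellSet, Set.mem_ofPred_eq, coe_map, Equiv.coe_toEmbedding, Set.mem_image, mem_coe,
    mem_sigma, mem_range, Finsupp.mem_support_iff, Sigma.exists]
  refine ⟨fun h => ⟨i, j, ⟨by omega, h⟩, rfl⟩, ?_⟩
  rintro ⟨i', j', ⟨-, h⟩, heq⟩
  obtain ⟨rfl, rfl⟩ := Prod.mk.inj heq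
  exact h

theorem exists_cellSet_eq {D : Set Cell} (hfin : D.Finite) (hD : IsLowerSet D) :
    ∃ ν : Shape, ν.cellSet = D := by
  let Y : YoungDiagram := ⟨hfin.toFinset, by rwa [hfin.coe_toFinset]⟩
  have hmem (i j : ℕ) : j < Y.rowLen i ↔ ((i, j) : Cell) ∈ D :=
    YoungDiagram.mem_iff_lt_rowLen.symm.trans (hfin.mem_toFinset)
  have hsupport : (Function.support Y.rowLen).Finite := by
    refine (hfin.image Prod.fst).subset fun i hi => ⟨(i, 0), ?_, rfl⟩
    exact (hmem i 0).1 (Nat.pos_of_ne_zero hi)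
  refine ⟨⟨Finsupp.ofSupportFinite Y.rowLen hsupport, fun i j hij => Y.rowLen_anti i j hij⟩, ?_⟩
  ext ⟨i, j⟩
  exact hmem i j

/-- Shapes, realized by the cells of their Young diagrams. -/
noncomputable def diagramModel : tableauSystem.CellModel Cell where
  cells := OrderEmbedding.ofMapLEIff cellSet fun _ _ => cellSet_subset_iff
  finite_cells ν := by
    rw [OrderEmbedding.coe_ofMapLEIff, cellSet_eq_coe]
    exact finite_toSet _
  ncard_cells ν := by
    rw [OrderEmbedding.coe_ofMapLEIff, cellSet_eq_coe, Set.ncard_coe_finset, card_map, card_sigma]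
    simp only [card_range]
    rfl

variable {N : ℕ} {lam : Nat.Partition N}

/-- The parts of a partition in decreasing order, so that `rowLen` reads off its entries. -/
noncomputable def rows (lam : Nat.Partition N) : List ℕ := (lam.parts.sort (· ≤ ·)).reverse

theorem coe_rows (lam : Nat.Partition N) : (rows lam : Multiset ℕ) = lam.parts := by
  rw [rows, Multiset.coe_reverse, Multiset.sort_eq]

theorem pairwise_rows (lam : Nat.Partition N) : (rows lam).Pairwise (· ≥ ·) := by
  rw [rows, List.pairwise_reverse]
  exact Multiset.pairwise_sort _ _

theorem antitone_rowLen (lam : Nat.Partition N) : Antitone (rowLen lam) := by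
  refine antitone_nat_of_succ_le fun r => ?_
  change (rows lam).getD (r + 1) 0 ≤ (rows lam).getD r 0
  by_cases h : r + 1 < (rows lam).length
  · rw [List.getD_eq_getElem _ _ h, List.getD_eq_getElem _ _ (by omega)]
    exact List.pairwise_iff_getElem.1 (pairwise_rows lam) r (r + 1) (by omega) h (by omega)
  · rw [List.getD_eq_default _ _ (not_lt.1 h)]
    exact Nat.zero_le _

/-- The shape with the row lengths of a partition. -/
noncomputable def ofPartition (lam : Nat.Partition N) : Shape :=
  ⟨(rows lam).toFinsupp, antitone_rowLen lam⟩

theorem map_ofPartition_support (lam : Nat.Partition N) :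
    (ofPartition lam).1.support.val.map (ofPartition lam).1 = lam.parts := by
  have hsupport : (ofPartition lam).1.support = range (rows lam).length := by
    ext r
    rw [Finsupp.mem_support_iff, mem_range]
    refine ⟨fun h => ?_, fun h => ?_⟩
    · by_contra hr
      exact h (List.getD_eq_default _ _ (not_lt.1 hr))
    · have hmem : (rows lam)[r] ∈ lam.parts := by
        rw [← coe_rows lam]
        exact List.getElem_mem h
      rw [ofPartition, List.toFinsupp_apply, List.getD_eq_getElem _ _ h]
      exact (lam.parts_pos hmem).ne'
  rw [hsupport, ← coe_rows lam, range_val, ← Multiset.coe_range, Multiset.map_coe]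
  refine congrArg _ (List.ext_getElem (by simp) fun r hr hr' => ?_)
  rw [List.getElem_map, List.getElem_range, ofPartition, List.toFinsupp_apply,
    List.getD_eq_getElem _ _ hr']

theorem size_ofPartition (lam : Nat.Partition N) : (ofPartition lam).size = N :=
  (congrArg Multiset.sum (map_ofPartition_support lam)).trans lam.parts_sum

theorem ofPartition_injective : Function.Injective (ofPartition (N := N)) := by
  intro lam mu h
  rw [Nat.Partition.ext_iff, ← map_ofPartition_support lam, ← map_ofPartition_support mu, h]

theorem isLowerSet_sublevel {t : Cell → ℕ} (ht : IsSSYT lam t) (k : ℕ) :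
    IsLowerSet {x ∈ (ofPartition lam).cellSet | t x ≤ k} := by
  obtain ⟨-, -, hrow, hcol⟩ := ht
  have hleft {i j j' : ℕ} (hj : j' ≤ j)
      (h : ((i, j) : Cell) ∈ {x ∈ (ofPartition lam).cellSet | t x ≤ k}) :
      ((i, j') : Cell) ∈ {x ∈ (ofPartition lam).cellSet | t x ≤ k} := by
    induction j, hj using Nat.le_induction with
    | base => exact h
    | succ j _ ih => exact ih ⟨j.lt_succ_self.trans h.1, (hrow i j h.1).trans h.2⟩
  have hup {i i' j : ℕ} (hi : i' ≤ i)
      (h : ((i, j) : Cell) ∈ {x ∈ (ofPartition lam).cellSet | t x ≤ k}) :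
      ((i', j) : Cell) ∈ {x ∈ (ofPartition lam).cellSet | t x ≤ k} := by
    induction i, hi using Nat.le_induction with
    | base => exact h
    | succ i _ ih =>
      exact ih ⟨lt_of_lt_of_le h.1 (antitone_rowLen lam i.le_succ), (hcol i j h.1).le.trans h.2⟩
  rintro ⟨i, j⟩ ⟨i', j'⟩ ⟨hi, hj⟩ h
  exact hup hi (hleft hj h)

theorem isFilling_of_isSSYT {t : Cell → ℕ} (ht : IsSSYT lam t) :
    diagramModel.IsFilling (ofPartition lam) t := by
  have hfin (k : ℕ) : {x ∈ (ofPartition lam).cellSet | t x ≤ k}.Finite :=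
    (diagramModel.finite_cells (ofPartition lam)).subset fun x hx => hx.1
  choose c hc using fun k => exists_cellSet_eq (hfin k) (isLowerSet_sublevel ht k)
  have hmem (k i j : ℕ) : j < (c k).1 i ↔ j < rowLen lam i ∧ t (i, j) ≤ k := by
    change ((i, j) : Cell) ∈ (c k).cellSet ↔ _
    rw [hc]
    rfl
  obtain ⟨hzero, hpos, -, hcol⟩ := ht
  refine ⟨hzero, hpos, c, fun k => ⟨hc k, fun r => ⟨le_of_forall_lt fun j hj => ?_,
    le_of_forall_lt fun j hj => ?_⟩⟩⟩
  · rw [hmem] at hj ⊢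
    exact ⟨hj.1, hj.2.trans k.le_succ⟩
  · rw [hmem] at hj ⊢
    have := hcol r j hj.1
    exact ⟨lt_of_lt_of_le hj.1 (antitone_rowLen lam r.le_succ), by omega⟩

theorem isSSYT_of_isFilling {t : Cell → ℕ} (ht : diagramModel.IsFilling (ofPartition lam) t) :
    IsSSYT lam t := by
  obtain ⟨hzero, hpos, c, hc⟩ := ht
  have hmem (k i j : ℕ) : j < (c k).1 i ↔ j < rowLen lam i ∧ t (i, j) ≤ k := by
    change ((i, j) : Cell) ∈ diagramModel.cells (c k) ↔ _
    rw [(hc k).1]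
    rfl
  refine ⟨hzero, hpos, fun i j hij => ?_, fun i j hij => ?_⟩
  · exact ((hmem _ i j).1 (j.lt_succ_self.trans ((hmem _ i (j + 1)).2 ⟨hij, le_rfl⟩))).2
  · obtain ⟨k, hk⟩ := Nat.exists_eq_succ_of_ne_zero (hpos _ hij).ne'
    have hlt : j < (c k).1 i := ((hmem (k + 1) (i + 1) j).2 ⟨hij, hk.le⟩).trans_le ((hc k).2 i).2
    exact (Nat.lt_succ_of_le ((hmem k i j).1 hlt).2).trans_eq hk.symm

theorem schurFn_eq_numFillings (lam : Nat.Partition N) (μ : ℕ → ℕ) :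
    schurFn lam μ = diagramModel.numFillings (ofPartition lam) μ := by
  have hiff (t : Cell → ℕ) : IsSSYT lam t ↔ diagramModel.IsFilling (ofPartition lam) t :=
    ⟨isFilling_of_isSSYT, isSSYT_of_isFilling⟩
  simp only [schurFn, StripSystem.CellModel.numFillings, hiff]
  rfl

theorem cells_bot : diagramModel.cells ⊥ = ∅ :=
  Set.eq_empty_of_forall_notMem fun x => Nat.not_lt_zero x.2

theorem schurFn_listWeight (lam : Nat.Partition N) (w : List ℕ) :
    schurFn lam (listWeight w) =
      tableauSystem.evalAt ⊥ (ofPartition lam) (NSym.complete w) := by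
  rw [schurFn_eq_numFillings, diagramModel.numFillings_listWeight cells_bot,
    StripSystem.evalAt_complete]

end Shape

/-! ### Kostka numbers are symmetric in the weight -/

namespace Shape

variable {κ ν τ : Shape} {r n : ℕ}

/-- The smallest possible length of row `r` in a shape `τ` such that `τ / κ` and `ν / τ` are
horizontal strips. -/
def minRow (κ ν : Shape) (r : ℕ) : ℕ := max (κ.1 r) (ν.1 (r + 1))

/-- The largest possible length of row `r` in a shape `τ` such that `τ / κ` and `ν / τ` are
horizontal strips. -/
def maxRow (κ ν : Shape) : ℕ → ℕ
  | 0 => ν.1 0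
  | r + 1 => min (ν.1 (r + 1)) (κ.1 r)

/-- `τ / κ` and `ν / τ` are horizontal strips, expressed row by row. -/
def IsBetween (κ ν τ : Shape) : Prop := ∀ r, minRow κ ν r ≤ τ.1 r ∧ τ.1 r ≤ maxRow κ ν r

theorem isBetween_iff :
    IsBetween κ ν τ ↔ IsHorizontalStrip κ τ ∧ IsHorizontalStrip τ ν := by
  constructor
  · intro h
    have hmin (r : ℕ) := max_le_iff.1 (h r).1
    refine ⟨fun r => ⟨(hmin r).1, (le_min_iff.1 (h (r + 1)).2).2⟩, fun r => ⟨?_, (hmin r).2⟩⟩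
    cases r with
    | zero => exact (h 0).2
    | succ r => exact (le_min_iff.1 (h (r + 1)).2).1
  · rintro ⟨hκ, hν⟩ r
    refine ⟨max_le (hκ r).1 (hν r).2, ?_⟩
    cases r with
    | zero => exact (hν 0).1
    | succ r => exact le_min (hν (r + 1)).1 (hκ r).2

theorem maxRow_le (κ ν : Shape) (r : ℕ) : maxRow κ ν r ≤ ν.1 r := by
  cases r with
  | zero => exact le_rfl
  | succ r => exact min_le_left _ _

theorem maxRow_succ_le_minRow (κ ν : Shape) (r : ℕ) : maxRow κ ν (r + 1) ≤ minRow κ ν r :=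
  (min_le_right _ _).trans (le_max_left _ _)

theorem sum_minRow_add_maxRow (κ ν : Shape) (n : ℕ) :
    ∑ r ∈ range n, minRow κ ν r + ∑ r ∈ range (n + 1), maxRow κ ν r =
      ∑ r ∈ range n, κ.1 r + ∑ r ∈ range (n + 1), ν.1 r := by
  rw [sum_range_succ' (maxRow κ ν), sum_range_succ' (fun r => ν.1 r), ← add_assoc, ← add_assoc,
    ← sum_add_distrib, ← sum_add_distrib]
  refine congrArg (· + ν.1 0) (sum_congr rfl fun r _ => ?_)
  rw [minRow, maxRow, min_comm, max_add_min]

/-- The Bender–Knuth involution: reflect every row of a shape between `κ` and `ν` in the interval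
of its possible lengths. -/
noncomputable def flipBetween (κ ν τ : Shape) (h : IsBetween κ ν τ) : Shape :=
  ⟨Finsupp.ofSupportFinite (fun r => minRow κ ν r + maxRow κ ν r - τ.1 r) <| by
      refine ν.1.hasFiniteSupport.subset fun r hr hν => hr ?_
      have := h r
      have := maxRow_le κ ν r
      simp only
      omega, by
    refine antitone_nat_of_succ_le fun r => ?_
    have := h r
    have := h (r + 1)
    have := maxRow_succ_le_minRow κ ν r
    simp only [Finsupp.ofSupportFinite_coe]
    omega⟩

theorem flipBetween_apply (h : IsBetween κ ν τ) (r : ℕ) :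
    (flipBetween κ ν τ h).1 r = minRow κ ν r + maxRow κ ν r - τ.1 r := rfl

theorem isBetween_flipBetween (h : IsBetween κ ν τ) : IsBetween κ ν (flipBetween κ ν τ h) := by
  intro r
  have := h r
  rw [flipBetween_apply]
  omega

theorem flipBetween_flipBetween (h : IsBetween κ ν τ) :
    flipBetween κ ν _ (isBetween_flipBetween h) = τ := by
  ext r
  have := h r
  rw [flipBetween_apply, flipBetween_apply]
  omega

theorem size_flipBetween_add_size (h : IsBetween κ ν τ) :
    (flipBetween κ ν τ h).size + τ.size = κ.size + ν.size := by
  obtain ⟨n, hn⟩ := ν.exists_apply_eq_zero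
  have hzero {ρ : Shape} (hρ : ρ ≤ ν) : ρ.1 n = 0 := Nat.le_zero.1 ((hρ n).trans_eq hn)
  obtain ⟨hκτ, hτν⟩ := isBetween_iff.1 h
  obtain ⟨-, hflip⟩ := isBetween_iff.1 (isBetween_flipBetween h)
  have hτ : τ ≤ ν := fun r => (hτν r).1
  have hκ : κ ≤ ν := fun r => (hκτ r).1.trans (hτ r)
  have hmax : maxRow κ ν n = 0 := Nat.le_zero.1 ((maxRow_le κ ν n).trans_eq hn)
  have hsum := sum_minRow_add_maxRow κ ν n
  rw [sum_range_succ, hmax, add_zero, sum_range_succ, hn, add_zero] at hsum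
  rw [size_eq_sum_range (hzero fun r => (hflip r).1), size_eq_sum_range (hzero hτ),
    size_eq_sum_range (hzero hκ), size_eq_sum_range hn, ← hsum, ← sum_add_distrib,
    ← sum_add_distrib]
  refine sum_congr rfl fun r _ => ?_
  have := h r
  rw [flipBetween_apply]
  omega

theorem commute_transfer_tableauSystem (a b : ℕ) :
    Commute (tableauSystem.transfer a) (tableauSystem.transfer b) := by
  refine StripSystem.commute_transfer (fun κ ν =>
    ⟨fun τ => if h : IsBetween κ ν τ then flipBetween κ ν τ h else τ, ?_⟩) a b
  rintro a b τ ⟨hκτ, ha⟩ ⟨hτν, hb⟩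
  have h : IsBetween κ ν τ := isBetween_iff.2 ⟨hκτ, hτν⟩
  have h' := isBetween_flipBetween h
  have hsize := size_flipBetween_add_size h
  obtain ⟨hκ, hν⟩ := isBetween_iff.1 h'
  simp only [h, dif_pos, h', flipBetween_flipBetween, and_true]
  simp only [tableauSystem] at ha hb
  exact ⟨⟨hκ, by simp only [tableauSystem]; omega⟩, hν, by simp only [tableauSystem]; omega⟩

/-! ### Elementary functions add vertical strips -/

theorem antitone_update {m : ℕ} (hbelow : τ.1 (r + 1) ≤ m) (habove : ∀ i < r, m ≤ τ.1 i) :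
    Antitone (τ.1.update r m) := by
  refine antitone_nat_of_succ_le fun i => ?_
  have := τ.2 i.le_succ
  rw [Finsupp.coe_update, Function.update_apply, Function.update_apply]
  grind

/-- The shape with row `r` replaced by a row of length `m`. -/
noncomputable def replaceRow (τ : Shape) (r m : ℕ) (hbelow : τ.1 (r + 1) ≤ m)
    (habove : ∀ i < r, m ≤ τ.1 i) : Shape :=
  ⟨τ.1.update r m, antitone_update hbelow habove⟩

theorem replaceRow_apply {m : ℕ} (hbelow : τ.1 (r + 1) ≤ m) (habove : ∀ i < r, m ≤ τ.1 i)
    (i : ℕ) : (replaceRow τ r m hbelow habove).1 i = if i = r then m else τ.1 i := by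
  rw [replaceRow, Finsupp.coe_update, Function.update_apply]

theorem size_replaceRow_add {m : ℕ} (hbelow : τ.1 (r + 1) ≤ m) (habove : ∀ i < r, m ≤ τ.1 i) :
    (replaceRow τ r m hbelow habove).size + τ.1 r = τ.size + m := by
  have herase := congrArg Finsupp.degree (τ.1.erase_add_single r)
  rw [map_add, Finsupp.degree_single] at herase
  simp only [size, replaceRow, Finsupp.update_eq_erase_add_single, map_add, Finsupp.degree_single]
  omega

theorem isHorizontalStrip_isVerticalStrip_replaceRow {m : ℕ} (hbelow : τ.1 (r + 1) ≤ m)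
    (habove : ∀ i < r, m ≤ τ.1 i) (hκτ : IsHorizontalStrip κ τ) (hτν : IsVerticalStrip τ ν)
    (htop : ∀ i < r, κ.1 i = ν.1 i) (hκm : κ.1 r ≤ m) (hmν : m ≤ ν.1 r) (hνm : ν.1 r ≤ m + 1) :
    IsHorizontalStrip κ (replaceRow τ r m hbelow habove) ∧
      IsVerticalStrip (replaceRow τ r m hbelow habove) ν := by
  refine ⟨fun i => ?_, fun i => ?_⟩
  · have := hκτ i
    have := ν.2 i.le_succ
    have := htop i
    simp only [replaceRow_apply]
    grind
  · have := hτν i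
    rw [replaceRow_apply]
    grind

theorem exists_topmost_row_lt (h : κ < ν) :
    ∃ r, κ.1 r < ν.1 r ∧ ∀ i < r, κ.1 i = ν.1 i := by
  have hex : ∃ r, κ.1 r < ν.1 r := by
    by_contra! hle
    exact h.not_ge hle
  exact ⟨Nat.find hex, Nat.find_spec hex, fun i hi =>
    (h.le i).antisymm (not_lt.1 (Nat.find_min hex hi))⟩

theorem sum_horizontal_vertical_eq_zero (h : κ < ν) :
    ∑ τ ∈ Icc κ ν with IsHorizontalStrip κ τ ∧ IsVerticalStrip τ ν, (-1 : ℚ) ^ τ.size = 0 := by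
  obtain ⟨r, hr, htop⟩ := exists_topmost_row_lt h
  set A : Finset Shape := {τ ∈ Icc κ ν | IsHorizontalStrip κ τ ∧ IsVerticalStrip τ ν}
  have hstrips : ∀ τ ∈ A, IsHorizontalStrip κ τ ∧ IsVerticalStrip τ ν :=
    fun τ hτ => (mem_filter.1 hτ).2
  -- The last cell of row `r` can be toggled freely: the rows above `r` agree in `κ` and `ν`, and
  -- row `r + 1` of `τ` is confined to the columns of `κ`.
  have hbelow : ∀ τ ∈ A, τ.1 (r + 1) ≤ 2 * ν.1 r - 1 - τ.1 r := fun τ hτ => by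
    have := (hstrips τ hτ).1 r
    have := (hstrips τ hτ).2 r
    omega
  have habove : ∀ τ ∈ A, ∀ i < r, 2 * ν.1 r - 1 - τ.1 r ≤ τ.1 i := fun τ hτ i hi => by
    have := (hstrips τ hτ).1 i
    have := (hstrips τ hτ).2 r
    have := ν.2 hi.le
    have := htop i hi
    omega
  refine sum_involution (fun τ hτ => replaceRow τ r _ (hbelow τ hτ) (habove τ hτ))
    (fun τ hτ => ?_) (fun τ hτ _ heq => ?_) (fun τ hτ => ?_) (fun τ hτ => ?_)
  · have hsize := size_replaceRow_add (hbelow τ hτ) (habove τ hτ)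
    obtain heq | heq : τ.1 r = ν.1 r ∨ ν.1 r = τ.1 r + 1 := by have := (hstrips τ hτ).2 r; omega
    · rw [show τ.size = (replaceRow τ r _ (hbelow τ hτ) (habove τ hτ)).size + 1 by omega,
        pow_succ, mul_neg_one, neg_add_cancel]
    · rw [show (replaceRow τ r _ (hbelow τ hτ) (habove τ hτ)).size = τ.size + 1 by omega,
        pow_succ, mul_neg_one, add_neg_cancel]
  · have hrow := congrArg (fun ρ : Shape => ρ.1 r) heq
    simp only [replaceRow_apply, if_true] at hrow
    omega
  · obtain ⟨hκτ, hτν⟩ := hstrips τ hτ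
    have := hτν r
    obtain ⟨hκ, hν⟩ := isHorizontalStrip_isVerticalStrip_replaceRow (hbelow τ hτ) (habove τ hτ)
      hκτ hτν htop (by omega) (by omega) (by omega)
    exact mem_filter.2 ⟨mem_Icc.2 ⟨fun i => (hκ i).1, fun i => (hν i).1⟩, hκ, hν⟩
  · have := (hstrips τ hτ).2 r
    ext i
    simp only [replaceRow_apply, if_true]
    split_ifs with hi
    · subst hi
      omega
    · rfl

theorem evalAt_tableauSystem_elementary (k : ℕ) (κ ν : Shape) :
    tableauSystem.evalAt κ ν (NSym.elementary k) =
      if IsVerticalStrip κ ν ∧ ν.size = κ.size + k then 1 else 0 := by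
  rw [StripSystem.evalAt_elementary (v := fun κ ν => if IsVerticalStrip κ ν then 1 else 0)
    (fun κ => if_pos fun r => ⟨le_rfl, Nat.le_succ _⟩) (fun κ ν h => ?_)]
  · by_cases hv : IsVerticalStrip κ ν
    · have hle : κ ≤ ν := fun r => (hv r).1
      simp only [hv, hle, true_and, if_true, tableauSystem]
    · simp only [hv, false_and, if_false, ite_self]
  · refine Eq.trans ?_ (sum_horizontal_vertical_eq_zero h)
    rw [sum_filter]
    refine sum_congr rfl fun τ _ => ?_
    rw [ite_and, mul_ite, mul_one, mul_zero]
    rfl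

/-! ### The two-column Jacobi–Trudi formula -/

/-- The shape with a single column, of length `a`. -/
noncomputable def column (a : ℕ) : Shape :=
  ⟨Finsupp.ofSupportFinite (fun r => if r < a then 1 else 0) <|
    (Set.finite_Iio a).subset fun r hr => by simpa using hr,
    antitone_nat_of_succ_le fun r => by
      simp only [Finsupp.ofSupportFinite_coe]
      split_ifs <;> omega⟩

theorem column_apply (a r : ℕ) : (column a).1 r = if r < a then 1 else 0 := rfl

theorem size_column (a : ℕ) : (column a).size = a := by
  rw [size_eq_sum_range ((column_apply a a).trans (if_neg a.lt_irrefl)),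
    sum_congr rfl fun r hr => (column_apply a r).trans (if_pos (mem_range.1 hr)), sum_const,
    card_range, smul_eq_mul, mul_one]

theorem eq_column_size (h : ∀ r, ν.1 r ≤ 1) : ν = column ν.size := by
  have hrow : ν = column (Nat.find ν.exists_apply_eq_zero) := by
    ext r
    rw [column_apply]
    split_ifs with hr
    · have := Nat.find_min ν.exists_apply_eq_zero hr
      have := h r
      omega
    · exact Nat.le_zero.1 ((ν.2 (not_lt.1 hr)).trans_eq (Nat.find_spec ν.exists_apply_eq_zero))
  rw [hrow, size_column, ← hrow]

theorem isVerticalStrip_bot_and_size_iff (a : ℕ) :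
    IsVerticalStrip ⊥ ν ∧ ν.size = a ↔ ν = column a := by
  constructor
  · rintro ⟨h, rfl⟩
    exact eq_column_size fun r => (h r).2
  · rintro rfl
    refine ⟨fun r => ⟨Nat.zero_le _, ?_⟩, size_column a⟩
    rw [column_apply]
    split_ifs <;> omega

theorem evalAt_elementary_mul_elementary (a b : ℕ) (ν : Shape) :
    tableauSystem.evalAt ⊥ ν (NSym.elementary a * NSym.elementary b) =
      if IsVerticalStrip (column a) ν ∧ ν.size = a + b then 1 else 0 := by
  have hbot : size ⊥ = 0 := map_zero Finsupp.degree
  have hfirst (x : Shape) : tableauSystem.evalAt ⊥ x (NSym.elementary a) =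
      if x = column a then 1 else 0 := by
    rw [evalAt_tableauSystem_elementary, hbot, zero_add]
    exact if_congr (isVerticalStrip_bot_and_size_iff a) rfl rfl
  rw [StripSystem.evalAt_mul, sum_eq_single (column a) (fun x _ hx => ?_) fun hnot => ?_]
  · rw [hfirst, if_pos rfl, one_mul, evalAt_tableauSystem_elementary, size_column]
  · rw [hfirst, if_neg hx, zero_mul]
  · refine mul_eq_zero_of_right _ (StripSystem.evalAt_of_not_le (fun hle => hnot ?_) _)
    exact mem_Icc.2 ⟨bot_le, hle⟩

theorem eq_column_add_column {C D : ℕ} (hsize : ν.size = 2 * C + D)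
    (h : IsVerticalStrip (column (C + D)) ν) (hlast : ν.1 (C + D) = 0) :
    ν.1 = (column (C + D)).1 + (column C).1 := by
  have hsub : (column (C + D)).1 + (ν.1 - (column (C + D)).1) = ν.1 :=
    add_tsub_cancel_of_le fun r => (h r).1
  let τ : Shape := ⟨ν.1 - (column (C + D)).1, antitone_nat_of_succ_le fun r => by
    have hr := h r
    have hanti := ν.2 r.le_succ
    simp only [column_apply, Finsupp.tsub_apply] at hr ⊢
    grind⟩
  have hτ : τ.size = C := by
    have hdegree : (column (C + D)).size + τ.size = ν.size :=
      (map_add Finsupp.degree _ _).symm.trans (congrArg _ hsub)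
    rw [size_column] at hdegree
    omega
  have hcolumn : τ = column C := by
    rw [← hτ]
    exact eq_column_size fun r => Nat.sub_le_iff_le_add'.2 (h r).2
  rw [← hcolumn, hsub]

theorem rows_twoOne (C D : ℕ) : rows (twoOne C D) = List.replicate C 2 ++ List.replicate D 1 := by
  refine List.Perm.eq_of_pairwise (le := (· ≥ ·)) (fun a b _ _ hab hba => hba.antisymm hab)
    (pairwise_rows _) ?_ ?_
  · refine List.pairwise_append.2 ⟨List.pairwise_replicate.2 (Or.inr le_rfl),
      List.pairwise_replicate.2 (Or.inr le_rfl), fun a ha b hb => ?_⟩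
    rw [List.eq_of_mem_replicate ha, List.eq_of_mem_replicate hb]
    exact one_le_two
  · rw [← Multiset.coe_eq_coe, coe_rows]
    rfl

theorem ofPartition_twoOne (C D : ℕ) :
    (ofPartition (twoOne C D)).1 = (column (C + D)).1 + (column C).1 := by
  ext r
  rw [Finsupp.add_apply, column_apply, column_apply, ofPartition, List.toFinsupp_apply,
    rows_twoOne]
  simp only [List.getD_eq_getElem?_getD, List.getElem?_append, List.length_replicate,
    List.getElem?_replicate]
  grind

theorem eq_ofPartition_twoOne_iff {C D : ℕ} (hsize : ν.size = 2 * C + D) :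
    ν = ofPartition (twoOne C D) ↔
      IsVerticalStrip (column (C + D)) ν ∧ ¬IsVerticalStrip (column (C + D + 1)) ν := by
  rw [Subtype.ext_iff, ofPartition_twoOne]
  constructor
  · intro h
    simp only [IsVerticalStrip, h, Finsupp.add_apply, column_apply]
    refine ⟨fun r => ?_, fun h' => ?_⟩
    · split_ifs <;> omega
    · have := h' (C + D)
      grind
  · rintro ⟨h, h'⟩
    refine eq_column_add_column hsize h ?_
    by_contra hlast
    refine h' fun r => ?_
    have hr := h r
    simp only [column_apply] at hr ⊢
    grind

theorem isVerticalStrip_column_of_succ {n : ℕ} (h : IsVerticalStrip (column (n + 1)) ν)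
    (hsize : ν.size < 2 * (n + 1)) : IsVerticalStrip (column n) ν := by
  have hlast : ν.1 n ≤ 1 := by
    by_contra! htwo
    have hle : (column (n + 1)).1 + (column (n + 1)).1 ≤ ν.1 := fun r => by
      have hrn := @ν.2 r n
      rw [Finsupp.add_apply, column_apply]
      grind
    obtain ⟨d, hd⟩ := exists_add_of_le hle
    have hdegree := congrArg Finsupp.degree hd
    rw [map_add, map_add] at hdegree
    have hcolumn := size_column (n + 1)
    rw [size] at hsize hcolumn
    omega
  intro r
  have hr := h r
  simp only [column_apply] at hr ⊢
  grind

theorem not_isVerticalStrip_column {n : ℕ} (hsize : ν.size < n) :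
    ¬IsVerticalStrip (column n) ν := fun h =>
  hsize.not_ge ((size_column n).ge.trans (size_strictMono.monotone fun r => (h r).1))

end Shape

/-- The noncommutative Schur function of shape `(2 ^ C, 1 ^ D)`, by the dual Jacobi–Trudi
determinant `e_{C + D} e_C - e_{C + D + 1} e_{C - 1}`. -/
noncomputable def NSym.twoColumn : ℕ → ℕ → NSym
  | 0, D => elementary D * elementary 0
  | C + 1, D =>
    elementary (C + 1 + D) * elementary (C + 1) - elementary (C + 1 + D + 1) * elementary C

theorem Shape.evalAt_twoColumn {C D : ℕ} {ν : Shape} (hsize : ν.size = 2 * C + D) :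
    tableauSystem.evalAt ⊥ ν (NSym.twoColumn C D) =
      if ν = ofPartition (twoOne C D) then 1 else 0 := by
  rw [if_congr (eq_ofPartition_twoOne_iff hsize) rfl rfl]
  cases C with
  | zero =>
    have hnot : ¬IsVerticalStrip (column (0 + D + 1)) ν := not_isVerticalStrip_column (by omega)
    rw [NSym.twoColumn, evalAt_elementary_mul_elementary]
    refine if_congr ?_ rfl rfl
    rw [zero_add] at hnot ⊢
    exact ⟨fun h => ⟨h.1, hnot⟩, fun h => ⟨h.1, by omega⟩⟩
  | succ C =>
    have hle (h : IsVerticalStrip (column (C + 1 + D + 1)) ν) :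
        IsVerticalStrip (column (C + 1 + D)) ν :=
      isVerticalStrip_column_of_succ h (by omega)
    have hfirst : ν.size = C + 1 + D + (C + 1) := by omega
    have hsecond : ν.size = C + 1 + D + 1 + C := by omega
    simp only [NSym.twoColumn, map_sub, evalAt_elementary_mul_elementary, ← hfirst, ← hsecond,
      and_true]
    split_ifs <;> simp_all

/-! ### Schur expansions -/

namespace Shape

variable {N : ℕ}

theorem sum_getD_le_of_isChain {ν : Shape} {w : List ℕ} {c : ℕ → Shape}
    (h : tableauSystem.IsChain w ⊥ ν c)
    (k : ℕ) : ∑ i ∈ range k, w.getD i 0 ≤ ∑ r ∈ range k, ν.1 r := by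
  have hrow : ∀ k, (c k).1 k = 0 := fun k => by
    induction k with
    | zero => rw [h.1]; rfl
    | succ k ih => exact Nat.le_zero.1 (((h.2.1 k).1 k).2.trans_eq ih)
  have hsize : (c k).size = ∑ i ∈ range k, w.getD i 0 := by
    induction k with
    | zero => rw [h.1]; exact map_zero Finsupp.degree
    | succ k ih => rw [sum_range_succ, ← ih]; exact (h.2.1 k).2
  rw [← hsize, size_eq_sum_range (hrow k)]
  exact sum_le_sum fun r _ => h.apply_le k r

theorem sum_rowLen_le_of_evalAt_ne_zero {lam mu : Nat.Partition N}
    (h : tableauSystem.evalAt ⊥ (ofPartition mu) (NSym.complete (rows lam)) ≠ 0) (k : ℕ) :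
    ∑ r ∈ range k, rowLen lam r ≤ ∑ r ∈ range k, rowLen mu r := by
  rw [StripSystem.evalAt_complete, Nat.cast_ne_zero] at h
  obtain ⟨⟨c, hc⟩⟩ := (Nat.card_ne_zero.1 h).1
  exact sum_getD_le_of_isChain hc k

/-- The first `k` rows of a shape. -/
noncomputable def firstRows (ν : Shape) (k : ℕ) : Shape :=
  ⟨ν.1.filter (· < k), antitone_nat_of_succ_le fun r => by
    have := ν.2 r.le_succ
    simp only [Finsupp.filter_apply]
    grind⟩

theorem firstRows_apply (ν : Shape) (k r : ℕ) :
    (ν.firstRows k).1 r = if r < k then ν.1 r else 0 := Finsupp.filter_apply _ _ _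

theorem size_firstRows (ν : Shape) (k : ℕ) : (ν.firstRows k).size = ∑ r ∈ range k, ν.1 r := by
  rw [size_eq_sum_range ((firstRows_apply ν k k).trans (if_neg k.lt_irrefl))]
  exact sum_congr rfl fun r hr => (firstRows_apply ν k r).trans (if_pos (mem_range.1 hr))

theorem isChain_firstRows (lam : Nat.Partition N) :
    tableauSystem.IsChain (rows lam) ⊥ (ofPartition lam) (ofPartition lam).firstRows := by
  refine ⟨?_, fun k => ⟨fun r => ?_, ?_⟩, ?_⟩
  · ext r
    rw [firstRows_apply, if_neg (Nat.not_lt_zero r)]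
    rfl
  · have := (ofPartition lam).2 r.le_succ
    rw [firstRows_apply, firstRows_apply, firstRows_apply]
    grind
  · change size _ = size _ + _
    rw [size_firstRows, size_firstRows, sum_range_succ]
    rfl
  · ext r
    rw [firstRows_apply, ite_eq_left_iff, not_lt]
    exact fun hr => (List.getD_eq_default _ _ hr).symm

theorem evalAt_complete_rows_ne_zero (lam : Nat.Partition N) :
    tableauSystem.evalAt ⊥ (ofPartition lam) (NSym.complete (rows lam)) ≠ 0 := by
  have := StripSystem.finite_chain (S := tableauSystem) (rows lam) ⊥ (ofPartition lam)
  have : Nonempty {c // tableauSystem.IsChain (rows lam) ⊥ (ofPartition lam) c} :=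
    ⟨_, isChain_firstRows lam⟩
  rw [StripSystem.evalAt_complete, Nat.cast_ne_zero]
  exact Nat.card_pos.ne'

theorem injective_sum_rowLen :
    Function.Injective fun (lam : Nat.Partition N) (k : ℕ) => ∑ r ∈ range k, rowLen lam r := by
  intro lam mu h
  refine ofPartition_injective (Subtype.ext (Finsupp.ext fun r => ?_))
  have hsucc := congrFun h (r + 1)
  have hr := congrFun h r
  simp only [sum_range_succ] at hsucc hr
  exact Nat.add_left_cancel (hsucc.trans (congrArg (· + rowLen mu r) hr.symm))

/-- The Kostka matrix is unitriangular for the dominance order, hence invertible. -/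
theorem exists_sum_mul_evalAt_complete_rows_eq (v : Nat.Partition N → ℚ) :
    ∃ c : Nat.Partition N → ℚ, ∀ lam, ∑ mu, c mu *
      tableauSystem.evalAt ⊥ (ofPartition mu) (NSym.complete (rows lam)) = v lam := by
  let K : Matrix (Nat.Partition N) (Nat.Partition N) ℚ := fun mu lam =>
    tableauSystem.evalAt ⊥ (ofPartition mu) (NSym.complete (rows lam))
  suffices hinj : Function.Injective K.vecMulLinear by
    obtain ⟨c, hc⟩ := LinearMap.injective_iff_surjective.1 hinj v
    exact ⟨c, fun lam => congrFun hc lam⟩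
  refine (injective_iff_map_eq_zero _).2 fun c hc => ?_
  by_contra hne
  have hsupport : ({lam | c lam ≠ 0} : Finset (Nat.Partition N)).Nonempty := by
    obtain ⟨lam, hlam⟩ := Function.ne_iff.1 hne
    exact ⟨lam, mem_filter.2 ⟨mem_univ _, hlam⟩⟩
  obtain ⟨lam, hmem, hmax⟩ := exists_maximalFor
    (fun (lam : Nat.Partition N) k => ∑ r ∈ range k, rowLen lam r) _ hsupport
  have hdiag : ∑ mu, c mu * K mu lam = c lam * K lam lam := by
    refine Fintype.sum_eq_single lam fun mu hmu => ?_
    by_contra hterm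
    have hle := sum_rowLen_le_of_evalAt_ne_zero (right_ne_zero_of_mul hterm)
    refine hmu (injective_sum_rowLen (le_antisymm (hmax ?_ hle) hle))
    exact mem_filter.2 ⟨mem_univ _, left_ne_zero_of_mul hterm⟩
  have hzero : c lam * K lam lam = 0 := hdiag.symm.trans (congrFun hc lam)
  exact mul_ne_zero (mem_filter.1 hmem).2 (evalAt_complete_rows_ne_zero lam) hzero

end Shape

namespace StripSystem

open Shape

variable {σ : Type*} [PartialOrder σ] [LocallyFiniteOrder σ] [DecidableEq σ] {S : StripSystem σ}

theorem eval_complete_rows_ofSums (hcomm : ∀ a b, Commute (S.transfer a) (S.transfer b)) {N : ℕ}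
    {w : List ℕ} (hw : (w : Multiset ℕ).sum = N) :
    S.eval (NSym.complete (rows (Nat.Partition.ofSums N w hw))) = S.eval (NSym.complete w) := by
  rw [← eval_complete_filter_ne_zero w]
  refine eval_complete_perm hcomm (Multiset.coe_eq_coe.1 ?_)
  rw [coe_rows]
  simp [Nat.Partition.ofSums]

theorem exists_evalAt_eq_sum_smul (hcomm : ∀ a b, Commute (S.transfer a) (S.transfer b)) {N : ℕ}
    {r s : σ} (hN : S.size s = S.size r + N) : ∃ c : Nat.Partition N → ℚ,
      S.evalAt r s = ∑ mu, c mu • tableauSystem.evalAt ⊥ (ofPartition mu) := by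
  obtain ⟨c, hc⟩ := exists_sum_mul_evalAt_complete_rows_eq
    fun lam : Nat.Partition N => S.evalAt r s (NSym.complete (rows lam))
  refine ⟨c, NSym.linearMap_ext fun w => ?_⟩
  simp only [LinearMap.sum_apply, LinearMap.smul_apply, smul_eq_mul]
  by_cases hw : (w : Multiset ℕ).sum = N
  · have hS := congrArg (fun f => f r s) (eval_complete_rows_ofSums hcomm hw)
    have htableau (mu : Nat.Partition N) := congrArg (fun f => f ⊥ (ofPartition mu))
      (eval_complete_rows_ofSums commute_transfer_tableauSystem hw)
    refine hS.symm.trans ((hc _).symm.trans (sum_congr rfl fun mu _ => ?_))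
    exact congrArg (c mu * ·) (htableau mu)
  · have hr : S.evalAt r s (NSym.complete w) = 0 := by
      by_contra hne
      have := size_eq_of_evalAt_complete_ne_zero hne
      exact hw (by rw [Multiset.sum_coe]; omega)
    have htableau (mu : Nat.Partition N) :
        tableauSystem.evalAt ⊥ (ofPartition mu) (NSym.complete w) = 0 := by
      by_contra hne
      have hsum := size_eq_of_evalAt_complete_ne_zero hne
      have hbot : tableauSystem.size ⊥ = 0 := map_zero Finsupp.degree
      rw [hbot, zero_add] at hsum
      exact hw ((Multiset.sum_coe w).trans (hsum.symm.trans (size_ofPartition mu)))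
    simp only [hr, htableau, mul_zero, sum_const_zero]

variable [OrderBot σ] {X : Type*} (M : S.CellModel X) {s : σ}

theorem numFillings_eq_sum_iff (hbot : M.cells ⊥ = ∅) {N : ℕ} {c : Nat.Partition N → ℚ} :
    (∀ μ, (M.numFillings s μ : ℚ) = ∑ mu, c mu * schurFn mu μ) ↔
      S.evalAt ⊥ s = ∑ mu, c mu • tableauSystem.evalAt ⊥ (ofPartition mu) := by
  have hword (w : List ℕ) : (M.numFillings s (listWeight w) : ℚ) =
      ∑ mu, c mu * schurFn mu (listWeight w) ↔ S.evalAt ⊥ s (NSym.complete w) =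
        (∑ mu, c mu • tableauSystem.evalAt ⊥ (ofPartition mu)) (NSym.complete w) := by
    rw [M.numFillings_listWeight hbot, ← evalAt_complete]
    simp only [LinearMap.sum_apply, LinearMap.smul_apply, smul_eq_mul, schurFn_listWeight]
  refine ⟨fun h => NSym.linearMap_ext fun w => (hword w).1 (h _), fun h μ => ?_⟩
  by_cases hμ : ∃ w, μ = listWeight w
  · obtain ⟨w, rfl⟩ := hμ
    exact (hword w).2 (by rw [h])
  · have hM : M.numFillings s μ = 0 :=
      not_not.1 (mt M.exists_eq_listWeight_of_numFillings_ne_zero hμ)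
    have hschur (mu : Nat.Partition N) : schurFn mu μ = 0 := by
      rw [schurFn_eq_numFillings, Nat.cast_eq_zero]
      exact not_not.1 (mt diagramModel.exists_eq_listWeight_of_numFillings_ne_zero hμ)
    simp only [hM, hschur, Nat.cast_zero, mul_zero, sum_const_zero]

theorem sCoeff_numFillings_twoOne (hbot : M.cells ⊥ = ∅)
    (hcomm : ∀ a b, Commute (S.transfer a) (S.transfer b)) {C D : ℕ}
    (hs : S.size s = 2 * C + D) :
    sCoeff (fun μ => M.numFillings s μ) (twoOne C D) = S.evalAt ⊥ s (NSym.twoColumn C D) := by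
  have hex : ∃ c : Nat.Partition (2 * C + D) →₀ ℚ, ∀ μ,
      (M.numFillings s μ : ℚ) = c.sum fun mu a => a * schurFn mu μ := by
    have hsize : S.size (⊥ : σ) = 0 := by rw [← M.ncard_cells, hbot, Set.ncard_empty]
    obtain ⟨c, hc⟩ := exists_evalAt_eq_sum_smul hcomm (r := ⊥) (hs.trans (by rw [hsize, zero_add]))
    refine ⟨Finsupp.equivFunOnFinite.symm c, fun μ => ?_⟩
    rw [Finsupp.sum_fintype _ _ fun _ => zero_mul _]
    exact (numFillings_eq_sum_iff M hbot).2 hc μ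
  rw [sCoeff, dif_pos hex]
  have hc : S.evalAt ⊥ s = ∑ mu, hex.choose mu • tableauSystem.evalAt ⊥ (ofPartition mu) := by
    refine (numFillings_eq_sum_iff M hbot).1 fun μ => (hex.choose_spec μ).trans ?_
    exact Finsupp.sum_fintype _ _ fun _ => zero_mul _
  rw [hc, LinearMap.sum_apply, Fintype.sum_eq_single (twoOne C D) fun mu hmu => ?_]
  · rw [LinearMap.smul_apply, evalAt_twoColumn (size_ofPartition _), if_pos rfl, smul_eq_mul,
      mul_one]
  · rw [LinearMap.smul_apply, evalAt_twoColumn (size_ofPartition _),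
      if_neg (ofPartition_injective.ne hmu), smul_zero]

end StripSystem

/-! ### Chromatic symmetric functions -/

section Graph

open Polynomial

variable {V : Type*} [DecidableEq V] (G : SimpleGraph V) {r s x : Finset V}

/-- Proper colorings are chains of stable sets of vertices. -/
def stableSystem : StripSystem (Finset V) where
  size := card
  IsStrip r s := r ⊆ s ∧ G.IsIndepSet ↑(s \ r)
  size_strictMono := card_strictMono
  isStrip_refl s := ⟨Subset.rfl, by simp [SimpleGraph.IsIndepSet]⟩
  le_of_isStrip h := h.1

/-- Vertex sets are their own sets of cells. -/
def vertexModel : (stableSystem G).CellModel V where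
  cells := coeEmb
  finite_cells := finite_toSet
  ncard_cells := Set.ncard_coe_finset

variable {G}

theorem isProperColoring_iff_isFilling [Fintype V] {f : V → ℕ} :
    IsProperColoring G f ↔ (vertexModel G).IsFilling univ f := by
  constructor
  · rintro ⟨hpos, hadj⟩
    refine ⟨fun v hv => absurd (mem_univ v) hv, fun v _ => hpos v, fun k => {v | f v ≤ k},
      fun k => ⟨by ext v; simp [vertexModel], ?_, ?_⟩⟩
    · exact monotone_filter_right _ fun v _ hv => Nat.le_succ_of_le hv
    · intro u hu v hv _
      have hlevel {v : V}
          (hv : v ∈ ({v | f v ≤ k + 1} : Finset V) \ ({v | f v ≤ k} : Finset V)) :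
          f v = k + 1 := by
        simp only [mem_sdiff, mem_filter, mem_univ, true_and] at hv
        omega
      exact fun huv => hadj u v huv ((hlevel hu).trans (hlevel hv).symm)
  · rintro ⟨-, hpos, c, hc⟩
    have hmem (k : ℕ) (v : V) : v ∈ c k ↔ f v ≤ k := by
      rw [← mem_coe]
      exact (Set.ext_iff.1 (hc k).1 v).trans (and_iff_right (mem_univ v))
    refine ⟨fun v => hpos v (mem_univ v), fun u v huv heq => ?_⟩
    obtain ⟨k, hk⟩ := Nat.exists_eq_succ_of_ne_zero (hpos v (mem_univ v)).ne'
    have hstrip {v : V} (hv : f v = k + 1) : v ∈ c (k + 1) \ c k := by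
      rw [mem_sdiff, hmem, hmem]
      omega
    exact (hc k).2.2 (hstrip (heq.trans hk)) (hstrip hk) huv.ne huv

theorem XCoeff_eq_numFillings [Fintype V] (μ : ℕ → ℕ) :
    XCoeff G μ = (vertexModel G).numFillings univ μ := by
  have hmem (v : V) : v ∈ (vertexModel G).cells univ := mem_univ v
  simp only [XCoeff, StripSystem.CellModel.numFillings, isProperColoring_iff_isFilling, hmem,
    true_and]

theorem commute_transfer_stableSystem (a b : ℕ) :
    Commute ((stableSystem G).transfer a) ((stableSystem G).transfer b) := by
  refine StripSystem.commute_transfer (fun r s => ⟨fun x => r ∪ (s \ x), ?_⟩) a b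
  rintro a b x ⟨⟨hrx, hx⟩, ha⟩ ⟨⟨hxs, hs⟩, hb⟩
  have hfirst : (r ∪ s \ x) \ r = s \ x := by grind
  have hsecond : s \ (r ∪ s \ x) = x \ r := by grind
  have hcard : #(r ∪ s \ x) = #r + #(s \ x) :=
    card_union_of_disjoint (disjoint_sdiff.mono_left hrx)
  have hsdiff := card_sdiff_add_card_eq_card hxs
  simp only [stableSystem] at ha hb
  refine ⟨⟨⟨subset_union_left, by rwa [hfirst]⟩, ?_⟩, ⟨⟨?_, by rwa [hsecond]⟩, ?_⟩, ?_⟩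
  · simp only [stableSystem]
    omega
  · exact union_subset (hrx.trans hxs) sdiff_subset
  · simp only [stableSystem]
    omega
  · rw [union_comm] at hsecond
    grind

/-- The recursion for the number of acyclic orientations of the induced subgraphs of `G`, obtained
by removing a set `S` of sinks and sieving. -/
structure IsAcyclicCount (G : SimpleGraph V) (a : Finset V → ℚ) : Prop where
  empty : a ∅ = 1
  sum_eq_zero : ∀ U : Finset V, U.Nonempty →
    ∑ S ∈ U.powerset, (if G.IsIndepSet (S : Set V) then (-1) ^ #S * a (U \ S) else 0) = 0

theorem IsAcyclicCount.sum_Icc_eq_zero {a : Finset V → ℚ} (ha : IsAcyclicCount G a)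
    (h : r ⊂ s) :
    ∑ x ∈ Icc r s, (if (stableSystem G).IsStrip r x then (-1) ^ #x * a (s \ x) else 0) = 0 := by
  rw [Icc_eq_image_powerset h.1, sum_image]
  · have hzero := congrArg ((-1) ^ #r * ·) (ha.sum_eq_zero _ (sdiff_nonempty.2 h.2))
    simp only [mul_zero, mul_sum] at hzero
    refine (sum_congr rfl fun S hS => ?_).trans hzero
    have hdisj : Disjoint r S := disjoint_sdiff.mono_right (mem_powerset.1 hS)
    have hstrip : (stableSystem G).IsStrip r (r ∪ S) ↔ G.IsIndepSet (S : Set V) := by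
      simp only [stableSystem, subset_union_left, true_and, union_sdiff_cancel_left hdisj]
    simp only [hstrip, card_union_of_disjoint hdisj, pow_add, mul_ite, mul_zero, mul_assoc,
      sdiff_sdiff_left, sup_eq_union]
  · intro S hS T hT (hST : r ∪ S = r ∪ T)
    have hS := disjoint_sdiff.mono_right (mem_powerset.1 hS)
    have hT := disjoint_sdiff.mono_right (mem_powerset.1 hT)
    rw [← union_sdiff_cancel_left hS, hST, union_sdiff_cancel_left hT]

theorem IsAcyclicCount.evalAt_elementary {a : Finset V → ℚ} (ha : IsAcyclicCount G a)
    (k : ℕ) (r s : Finset V) :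
    (stableSystem G).evalAt r s (NSym.elementary k) =
      if r ⊆ s ∧ #s = #r + k then a (s \ r) else 0 := by
  rw [StripSystem.evalAt_elementary (v := fun r s => a (s \ r))
    (fun r => by rw [sdiff_self]; exact ha.empty) fun r s hrs => ha.sum_Icc_eq_zero hrs]
  simp only [stableSystem]
  congr

theorem sCoeff_XCoeff_twoOne_eq_evalAt [Fintype V] {C D : ℕ} (hV : Fintype.card V = 2 * C + D) :
    sCoeff (XCoeff G) (twoOne C D) =
      (stableSystem G).evalAt ⊥ univ (NSym.twoColumn C D) := by
  rw [← StripSystem.sCoeff_numFillings_twoOne (vertexModel G) coe_empty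
    commute_transfer_stableSystem hV]
  exact congrArg (sCoeff · _) (funext XCoeff_eq_numFillings)

/-- The generating polynomial of the pairs of acyclic orientations of `G[x]` and `G[xᶜ]`, graded by
the size of `xᶜ`. -/
noncomputable def splitPolynomial [Fintype V] (a : Finset V → ℚ) : ℚ[X] :=
  ∑ x, C (a x * a xᶜ) * X ^ #xᶜ

theorem IsAcyclicCount.evalAt_elementary_mul_elementary [Fintype V] {a : Finset V → ℚ}
    (ha : IsAcyclicCount G a) {p q : ℕ} (hV : Fintype.card V = p + q) :
    (stableSystem G).evalAt ⊥ univ (NSym.elementary p * NSym.elementary q) =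
      (splitPolynomial a).coeff q := by
  rw [StripSystem.evalAt_mul, splitPolynomial, finsetSum_coeff]
  refine sum_congr (by ext; simp) fun x _ => ?_
  have hcard := card_add_card_compl x
  rw [ha.evalAt_elementary, ha.evalAt_elementary, coeff_C_mul_X_pow, ← compl_eq_univ_sdiff,
    ite_zero_mul_ite_zero]
  refine if_congr ⟨?_, ?_⟩ (by simp) rfl
  · rintro ⟨⟨-, -⟩, -, h⟩
    rw [card_univ] at h
    omega
  · intro h
    simp only [bot_eq_empty, card_empty, card_univ, empty_subset, subset_univ, true_and]
    omega

theorem IsAcyclicCount.sCoeff_XCoeff_twoOne [Fintype V] {a : Finset V → ℚ}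
    (ha : IsAcyclicCount G a) {c d : ℕ} (hV : Fintype.card V = 2 * c + d) :
    sCoeff (XCoeff G) (twoOne c d) = ((1 - X) * splitPolynomial a).coeff c := by
  rw [sCoeff_XCoeff_twoOne_eq_evalAt hV, sub_mul, one_mul, coeff_sub]
  obtain _ | c := c
  · rw [NSym.twoColumn, ha.evalAt_elementary_mul_elementary (by omega), coeff_X_mul_zero, sub_zero]
  · rw [NSym.twoColumn, map_sub, ha.evalAt_elementary_mul_elementary (by omega),
      ha.evalAt_elementary_mul_elementary (by omega), coeff_X_mul]

end Graph

/-! ### Generalized nets -/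

open scoped Nat
open Polynomial

section Net

variable {α β : Type*} {G : SimpleGraph (α ⊕ β)} {anchor : β → α}

/-- `G` is a complete graph on the body `α` with each `b : β` attached as a pendant vertex to
`anchor b`. -/
structure IsNet (G : SimpleGraph (α ⊕ β)) (anchor : β → α) : Prop where
  adj_inl {v w : α} : G.Adj (.inl v) (.inl w) ↔ v ≠ w
  adj_inl_inr {v : α} {b : β} : G.Adj (.inl v) (.inr b) ↔ anchor b = v
  not_adj_inr {b c : β} : ¬G.Adj (.inr b) (.inr c)

theorem IsNet.isIndepSet_disjSum (h : IsNet G anchor) (A : Finset α) (B : Finset β) :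
    G.IsIndepSet (A.disjSum B : Set (α ⊕ β)) ↔ #A ≤ 1 ∧ ∀ b ∈ B, anchor b ∉ A := by
  have hinr {b : β} {v : α} : G.Adj (.inr b) (.inl v) ↔ anchor b = v :=
    (G.adj_comm _ _).trans h.adj_inl_inr
  simp only [SimpleGraph.IsIndepSet, Set.Pairwise, mem_coe, Sum.forall, inl_mem_disjSum,
    inr_mem_disjSum, h.adj_inl, h.adj_inl_inr, h.not_adj_inr, hinr, card_le_one]
  grind

theorem sum_powerset_neg_one_pow_mul_factorial {L : Finset α} (hL : L.Nonempty) :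
    ∑ A ∈ L.powerset, (if #A ≤ 1 then (-1) ^ #A * ((#L - #A)! : ℚ) else 0) = 0 := by
  obtain ⟨n, hn⟩ := Nat.exists_eq_succ_of_ne_zero hL.card_pos.ne'
  rw [sum_powerset_apply_card fun m => if m ≤ 1 then (-1) ^ m * ((#L - m)! : ℚ) else 0, hn,
    sum_range_succ', sum_range_succ', sum_eq_zero fun m _ => by simp]
  simp [Nat.factorial_succ]

variable [DecidableEq α] [DecidableEq β]

/-- The number of acyclic orientations of the subgraph of a net induced by the set `U`. -/
def netWeight (anchor : β → α) (U : Finset (α ⊕ β)) : ℚ :=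
  (#U.toLeft)! * ∏ b ∈ U.toRight, if anchor b ∈ U.toLeft then 2 else 1

theorem sum_powerset_pendants {L A : Finset α} (hA : A ⊆ L) (R : Finset β) :
    ∑ B ∈ R.powerset, (if ∀ b ∈ B, anchor b ∉ A then
        (-1) ^ #B * ∏ b ∈ R \ B, (if anchor b ∈ L \ A then 2 else 1) else 0) =
      ∏ b ∈ R, if anchor b ∈ L then (1 : ℚ) else 0 := by
  calc _ = ∑ B ∈ R.powerset, (∏ b ∈ B, if anchor b ∉ A then (-1 : ℚ) else 0) *
        ∏ b ∈ R \ B, (if anchor b ∈ L \ A then 2 else 1) := by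
        simp only [prod_ite_zero, prod_const, ite_mul, zero_mul]
    _ = _ := by
        rw [← prod_add]
        refine prod_congr rfl fun b _ => ?_
        have := @hA (anchor b)
        by_cases anchor b ∈ A <;> by_cases anchor b ∈ L <;> simp_all
        norm_num

theorem IsNet.isAcyclicCount (h : IsNet G anchor) : IsAcyclicCount G (netWeight anchor) where
  empty := by
    rw [show (∅ : Finset (α ⊕ β)) = disjSum ∅ ∅ from (disjSum_eq_empty.2 ⟨rfl, rfl⟩).symm,
      netWeight, toLeft_disjSum, toRight_disjSum]
    simp
  sum_eq_zero U hU := by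
    obtain ⟨⟨L, R⟩, rfl⟩ := sumEquiv.symm.surjective U
    calc _ = ∑ A ∈ L.powerset, ∑ B ∈ R.powerset,
          (if G.IsIndepSet (A.disjSum B : Set (α ⊕ β)) then
            (-1) ^ #(A.disjSum B) * netWeight anchor (L.disjSum R \ A.disjSum B) else 0) := by
          rw [← sum_product']
          refine sum_equiv sumEquiv.toEquiv (fun S => ?_) fun S _ => ?_
          · simp [subset_disjSum, sumEquiv]
          · simp [sumEquiv, toLeft_disjSum_toRight]
      _ = ∑ A ∈ L.powerset, (if #A ≤ 1 then (-1) ^ #A * ((#L - #A)! : ℚ) else 0) *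
            ∏ b ∈ R, if anchor b ∈ L then (1 : ℚ) else 0 := by
          refine sum_congr rfl fun A hA => ?_
          rw [← sum_powerset_pendants (mem_powerset.1 hA) R, mul_sum]
          refine sum_congr rfl fun B _ => ?_
          rw [netWeight, toLeft_sdiff, toRight_sdiff, toLeft_disjSum, toLeft_disjSum,
            toRight_disjSum, toRight_disjSum, card_sdiff_of_subset (mem_powerset.1 hA),
            card_disjSum, pow_add, ite_zero_mul_ite_zero]
          exact if_congr (h.isIndepSet_disjSum A B) (by ring) rfl
      _ = 0 := by
          rw [← sum_mul]
          obtain rfl | hL := L.eq_empty_or_nonempty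
          · obtain ⟨b, hb⟩ : R.Nonempty := by simpa using hU
            rw [prod_eq_zero hb (if_neg (notMem_empty _)), mul_zero]
          · rw [sum_powerset_neg_one_pow_mul_factorial hL, zero_mul]

theorem splitPolynomial_netWeight [Fintype α] [Fintype β] (anchor : β → α) :
    splitPolynomial (netWeight anchor) =
      ∑ I : Finset α, ((#I)! * (#Iᶜ)! : ℚ[X]) * (X ^ #Iᶜ *
        ∏ b, if anchor b ∈ I then X + 2 else 2 * X + 1) := by
  have hpendants (I : Finset α) :
      ∏ b, (if anchor b ∈ I then X + 2 else 2 * X + 1 : ℚ[X]) = ∑ K : Finset β,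
        (∏ b ∈ K, if anchor b ∈ I then 2 else 1) *
          ∏ b ∈ Kᶜ, X * if anchor b ∈ Iᶜ then 2 else 1 := by
    rw [← Fintype.prod_add]
    refine prod_congr rfl fun b _ => ?_
    by_cases hb : anchor b ∈ I <;> simp [hb] <;> ring
  simp only [hpendants, mul_sum]
  rw [← Fintype.sum_prod_type', splitPolynomial]
  refine Fintype.sum_equiv sumEquiv.toEquiv _ _ fun x => ?_
  have hx : sumEquiv.toEquiv x = (x.toLeft, x.toRight) := rfl
  have hcompl : xᶜ = x.toLeftᶜ.disjSum x.toRightᶜ := by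
    ext (v | b) <;> simp
  rw [hcompl, netWeight, netWeight, toLeft_disjSum, toRight_disjSum, card_disjSum, prod_mul_distrib,
    prod_const]
  simp only [hx, map_mul, map_natCast, map_prod, apply_ite C, map_ofNat, map_one]
  ring

end Net

/-! ### The generating polynomial of a generalized net -/


section FactorialPairing

variable {R : Type*} [CommSemiring R]

/-- The linear functional `X ^ i ↦ i! (n - i)!` on polynomials of degree at most `n`. Up to the
factor `(n + 1)!` it integrates `t ^ i (1 - t) ^ (n - i)` over the unit interval. -/
noncomputable def factorialPairing (n : ℕ) : R[X] →ₗ[R] R :=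
  ∑ i ∈ range (n + 1), ((i ! * (n - i)! : ℕ) : R) • lcoeff R i

theorem factorialPairing_apply (n : ℕ) (p : R[X]) :
    factorialPairing n p = ∑ i ∈ range (n + 1), ((i ! * (n - i)! : ℕ) : R) * p.coeff i := by
  simp only [factorialPairing, LinearMap.sum_apply, LinearMap.smul_apply, lcoeff_apply, smul_eq_mul]

theorem factorialPairing_succ (n : ℕ) (p : R[X]) :
    factorialPairing (n + 1) p = (n + 1)! * p.coeff 0 + factorialPairing n (derivative p) := by
  rw [factorialPairing_apply, factorialPairing_apply, sum_range_succ', add_comm]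
  congr 1
  · simp
  · refine sum_congr rfl fun i _ => ?_
    rw [coeff_derivative, Nat.factorial_succ, Nat.add_sub_add_right]
    push_cast
    ring

theorem factorialPairing_prod {ι : Type*} [Fintype ι] [DecidableEq ι] (f g : ι → R) :
    factorialPairing (Fintype.card ι) (∏ v, (C (f v) * X + C (g v))) =
      ∑ I : Finset ι, (#I)! * (#Iᶜ)! * ((∏ v ∈ I, f v) * ∏ v ∈ Iᶜ, g v) := by
  rw [Fintype.prod_add, map_sum]
  refine sum_congr rfl fun I _ => ?_
  have hmono : (∏ v ∈ I, C (f v) * X) * ∏ v ∈ Iᶜ, C (g v) =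
      C ((∏ v ∈ I, f v) * ∏ v ∈ Iᶜ, g v) * X ^ #I := by
    rw [prod_mul_distrib, prod_const, map_mul, map_prod, map_prod]
    ring
  have hI : #I ∈ range (Fintype.card ι + 1) := mem_range_succ_iff.2 (card_le_univ I)
  simp only [hmono, factorialPairing_apply, coeff_C_mul_X_pow, mul_ite, mul_zero, sum_ite_eq', hI,
    if_true, card_compl, Nat.cast_mul]

end FactorialPairing

/-- A product over the body vertices of a net with `c` anchors and `d` buoys. The outer variable
marks the body vertices in the first part of a vertex bipartition and the inner variable the
vertices in the second part; pendants have been summed out. -/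
noncomputable def netProduct (c d : ℕ) : ℚ[X][X] :=
  (C (X + 2) * X + C (X * (2 * X + 1))) ^ c * (X + C X) ^ d

theorem coeff_zero_netProduct (c d : ℕ) :
    (netProduct c d).coeff 0 = X ^ (c + d) * (2 * X + 1) ^ c := by
  simp only [netProduct, coeff_zero_eq_eval_zero, eval_mul, eval_pow, eval_add, eval_C, eval_X,
    mul_zero, zero_add, mul_pow, pow_add]
  ring

theorem derivative_netProduct (c d : ℕ) :
    derivative (netProduct c d) =
      ((c : ℚ[X]) * (X + 2)) • netProduct (c - 1) d + (d : ℚ[X]) • netProduct c (d - 1) := by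
  simp only [netProduct, derivative_mul, derivative_pow, derivative_add, derivative_C,
    derivative_X, smul_eq_C_mul, C_mul, C_eq_natCast]
  ring

/-- `splitPolynomial` for the generalized net with `c` anchors and `d` buoys. -/
noncomputable def netPolynomial (c d : ℕ) : ℚ[X] := factorialPairing (c + d) (netProduct c d)

theorem netPolynomial_eq (c d : ℕ) :
    netPolynomial c d = ((c + d)! : ℚ[X]) * (X ^ (c + d) * (2 * X + 1) ^ c) +
      ((c : ℚ[X]) * ((X + 2) * netPolynomial (c - 1) d) +
        (d : ℚ[X]) * netPolynomial c (d - 1)) := by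
  obtain hn | ⟨n, hn⟩ : c + d = 0 ∨ ∃ n, c + d = n + 1 := by
    cases c + d <;> simp
  · obtain ⟨rfl, rfl⟩ := Nat.add_eq_zero_iff.1 hn
    simp [netPolynomial, netProduct, factorialPairing_apply]
  have hanchor : (c : ℚ[X]) * netPolynomial (c - 1) d =
      c * factorialPairing n (netProduct (c - 1) d) := by
    obtain _ | c := c
    · simp
    · rw [netPolynomial, show c + 1 - 1 + d = n by omega]
  have hbuoy : (d : ℚ[X]) * netPolynomial c (d - 1) =
      d * factorialPairing n (netProduct c (d - 1)) := by
    obtain _ | d := d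
    · simp
    · rw [netPolynomial, show c + (d + 1 - 1) = n by omega]
  rw [mul_left_comm (c : ℚ[X]), hanchor, hbuoy, netPolynomial, hn, factorialPairing_succ,
    coeff_zero_netProduct, derivative_netProduct, map_add, map_smul, map_smul, smul_eq_mul,
    smul_eq_mul, hn]
  ring

theorem isNet_genNet (c d : ℕ) : IsNet (genNet (c + d) c) (Fin.castAdd d) where
  adj_inl := by simp [genNet, Fin.ext_iff]
  adj_inl_inr := by simp [genNet, Fin.ext_iff, eq_comm]
  not_adj_inr := by simp [genNet]

theorem splitPolynomial_genNet (c d : ℕ) :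
    splitPolynomial (netWeight (Fin.castAdd d : Fin c → Fin (c + d))) = netPolynomial c d := by
  have hprod : netProduct c d = ∏ v : Fin (c + d),
      (C (if (v : ℕ) < c then X + 2 else 1) * X +
        C (X * if (v : ℕ) < c then 2 * X + 1 else 1)) := by
    simp [Fin.prod_univ_add, netProduct]
  rw [splitPolynomial_netWeight, netPolynomial, hprod]
  have hpairing := factorialPairing_prod
    (fun v : Fin (c + d) => if (v : ℕ) < c then (X + 2 : ℚ[X]) else 1)
    fun v => X * if (v : ℕ) < c then 2 * X + 1 else 1
  rw [Fintype.card_fin] at hpairing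
  rw [hpairing]
  refine sum_congr rfl fun I _ => ?_
  have hbody : ∏ b : Fin c, (if Fin.castAdd d b ∈ I then X + 2 else 2 * X + 1 : ℚ[X]) =
      (∏ v ∈ I, if (v : ℕ) < c then X + 2 else 1) *
        ∏ v ∈ Iᶜ, if (v : ℕ) < c then 2 * X + 1 else 1 := by
    calc _ = ∏ v : Fin (c + d),
          if (v : ℕ) < c then (if v ∈ I then X + 2 else 2 * X + 1 : ℚ[X]) else 1 := by
          simp [Fin.prod_univ_add]
      _ = _ := by
          rw [← prod_mul_prod_compl I]
          congr 1 <;> refine prod_congr rfl fun v hv => ?_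
          · rw [if_pos hv]
          · rw [if_neg (mem_compl.1 hv)]
  rw [prod_mul_distrib, prod_const, hbody]
  ring

theorem coeff_splitPolynomial_symm {V : Type*} [Fintype V] [DecidableEq V] (a : Finset V → ℚ)
    {i j : ℕ} (h : i + j = Fintype.card V) :
    (splitPolynomial a).coeff i = (splitPolynomial a).coeff j := by
  simp only [splitPolynomial, finsetSum_coeff, coeff_C_mul_X_pow]
  refine sum_equiv (compl_involutive.toPerm _) (by simp) fun x _ => ?_
  have := card_add_card_compl x
  rw [Function.Involutive.coe_toPerm]
  refine if_congr ?_ ?_ rfl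
  · rw [compl_compl]
    omega
  · rw [compl_compl, mul_comm]

theorem coeff_netPolynomial_symm {c d i j : ℕ} (h : i + j = 2 * c + d) :
    (netPolynomial c d).coeff i = (netPolynomial c d).coeff j := by
  rw [← splitPolynomial_genNet, coeff_splitPolynomial_symm]
  rw [Fintype.card_sum, Fintype.card_fin, Fintype.card_fin]
  omega

theorem fCD_eq_coeff (c d : ℕ) : fCD c d = ((1 - X) * netPolynomial c d).coeff c := by
  rw [fCD, (isNet_genNet c d).isAcyclicCount.sCoeff_XCoeff_twoOne, splitPolynomial_genNet]
  rw [Fintype.card_sum, Fintype.card_fin, Fintype.card_fin]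
  omega

theorem coeff_one_sub_X_mul_netPolynomial {c d k : ℕ} (h : k < c + d) :
    ((1 - X) * netPolynomial c d).coeff k =
      (c : ℚ) * ((X + 2) * ((1 - X) * netPolynomial (c - 1) d)).coeff k +
        (d : ℚ) * ((1 - X) * netPolynomial c (d - 1)).coeff k := by
  have hdvd : (1 - X) * netPolynomial c d =
      X ^ (c + d) * (((c + d)! : ℚ[X]) * ((1 - X) * (2 * X + 1) ^ c)) +
        (C (c : ℚ) * ((X + 2) * ((1 - X) * netPolynomial (c - 1) d)) +
          C (d : ℚ) * ((1 - X) * netPolynomial c (d - 1))) := by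
    rw [netPolynomial_eq, C_eq_natCast, C_eq_natCast]
    ring
  rw [hdvd, coeff_add, coeff_X_pow_mul', if_neg h.not_ge, zero_add, coeff_add, coeff_C_mul,
    coeff_C_mul]

theorem coeff_succ_X_add_two_mul (p : ℚ[X]) (k : ℕ) :
    ((X + 2) * p).coeff (k + 1) = p.coeff k + 2 * p.coeff (k + 1) := by
  rw [add_mul, coeff_add, coeff_X_mul, coeff_ofNat_mul]

theorem coeff_one_sub_X_mul_netPolynomial_antisymm {c d i j : ℕ}
    (h : i + j + 1 = 2 * c + d) :
    ((1 - X) * netPolynomial c d).coeff (i + 1) = -((1 - X) * netPolynomial c d).coeff (j + 1) := by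
  simp only [sub_mul, one_mul, coeff_sub, coeff_X_mul]
  rw [coeff_netPolynomial_symm (show i + 1 + j = 2 * c + d by omega),
    coeff_netPolynomial_symm (show i + (j + 1) = 2 * c + d by omega), neg_sub]

theorem coeff_one_sub_X_mul_netPolynomial_eq_zero {c d k : ℕ} (hc : c < k) (hk : k ≤ c + d) :
    ((1 - X) * netPolynomial c d).coeff k = 0 := by
  induction hn : c + d using Nat.strong_induction_on generalizing c d k with
  | _ n ih =>
  subst hn
  have hlt {k : ℕ} (hc : c < k) (hk : k < c + d) : ((1 - X) * netPolynomial c d).coeff k = 0 := by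
    rw [coeff_one_sub_X_mul_netPolynomial hk, ih _ _ hc (by omega) rfl, mul_zero, add_zero]
    · obtain _ | c := c
      · rw [Nat.cast_zero, zero_mul]
      obtain ⟨k, rfl⟩ := Nat.exists_eq_add_of_lt hc
      rw [coeff_succ_X_add_two_mul, ih _ _ _ _ rfl, ih _ _ _ _ rfl]
      · simp
      all_goals omega
    · omega
  obtain hk | rfl := hk.lt_or_eq
  · exact hlt hc hk
  have hanti := coeff_one_sub_X_mul_netPolynomial_antisymm
    (show c + d - 1 + c + 1 = 2 * c + d by omega)
  rw [Nat.sub_add_cancel (by omega)] at hanti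
  obtain rfl | hd : d = 1 ∨ 1 < d := by omega
  · exact self_eq_neg.1 hanti
  · rw [hanti, hlt c.lt_succ_self (by omega), neg_zero]

/-- For `C ≥ 1` and `D ≥ 1`:
`f(C,D) = C·f(C-1,D) + D·f(C,D-1)`. -/
theorem fCD_recurrence (C D : ℕ) (hC : 1 ≤ C) (hD : 1 ≤ D) :
    fCD C D = (C : ℚ) * fCD (C - 1) D + (D : ℚ) * fCD C (D - 1) := by
  obtain ⟨c, rfl⟩ := Nat.exists_eq_add_of_le' hC
  rw [fCD_eq_coeff, coeff_one_sub_X_mul_netPolynomial (by omega), coeff_succ_X_add_two_mul,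
    Nat.add_sub_cancel, coeff_one_sub_X_mul_netPolynomial_eq_zero c.lt_succ_self (by omega),
    mul_zero, add_zero, fCD_eq_coeff, fCD_eq_coeff]
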